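/- arXiv:1304.0296 — 3 statements merged into one kernel-verified Lean document; each statement's English description precedes it below -/
import Mathlib

section
/- Let A = A₁ ⊕ ⋯ ⊕ A_m be a block-diagonal complex matrix, where A_j is of size n_j for 1 ≤ j ≤ m. Then d(A) ≥ Σ_{j=1}^m d(A_j), and d(A) = Σ_{j=1}^m d(A_j) if and only if there exists a real θ₀ such that d(A_j) = i_{≥0}(Re(e^{−iθ₀}A_j)) for all j. In particular, d(A₁ ⊕ ⋯ ⊕ A₁) (m copies) = m·d(A₁), and d(A₁ ⊕ 0_n) = d(A₁) + n. -/
open Matrix Polynomial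

noncomputable def zdi {m : Type*} [Fintype m] (A : Matrix m m ℂ) : ℕ :=
  sSup {k : ℕ | ∃ V : Matrix m (Fin k) ℂ, Vᴴ * V = 1 ∧ Vᴴ * A * V = 0}

noncomputable def matRe {m : Type*} (A : Matrix m m ℂ) : Matrix m m ℂ :=
  (2⁻¹ : ℂ) • (A + Aᴴ)

noncomputable def iNonneg {m : Type*} [Fintype m] [DecidableEq m] (M : Matrix m m ℂ) : ℕ :=
  if hM : M.IsHermitian then (Finset.univ.filter fun i => 0 ≤ hM.eigenvalues i).card else 0

def numRange {m : Type*} [Fintype m] (A : Matrix m m ℂ) : Set ℂ :=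
  {z | ∃ x : m → ℂ, star x ⬝ᵥ x = 1 ∧ star x ⬝ᵥ A.mulVec x = z}

noncomputable def arg2pi (z : ℂ) : ℝ :=
  if 0 ≤ Complex.arg z then Complex.arg z else Complex.arg z + 2 * Real.pi

def UnitSim {m : Type*} [Fintype m] [DecidableEq m] (A B : Matrix m m ℂ) : Prop :=
  ∃ U ∈ Matrix.unitaryGroup m ℂ, Uᴴ * A * U = B

def UnitSimG {m l : Type*} [Fintype m] [DecidableEq m] [Fintype l] [DecidableEq l]
    (A : Matrix m m ℂ) (B : Matrix l l ℂ) : Prop :=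
  ∃ e : m ≃ l, UnitSim (Matrix.reindex e e A) B

def superMat (n : ℕ) (w : ℕ → ℂ) : Matrix (Fin n) (Fin n) ℂ :=
  Matrix.of fun i j => if (j : ℕ) = (i : ℕ) + 1 then w (i : ℕ) else 0

def cycMat (n : ℕ) (w : ℕ → ℂ) : Matrix (Fin n) (Fin n) ℂ :=
  Matrix.of fun i j => if (j : ℕ) = ((i : ℕ) + 1) % n then w (i : ℕ) else 0

/-!
By a theorem of Li and Sze, `d(A)` is the minimum over `θ` of `i_{≥0}(Re (exp (-iθ) A))`. Since
`i_{≥0}` is additive over diagonal blocks and bounds `d` from above in every direction, `d` is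
additive exactly when a single direction attains the minimum for all blocks.

Call a nonzero isotropic `x` with `A x` and `A† x` on a common line deflating. The Li-Sze theorem
goes by induction on the dimension `k` of the isotropic subspace: a deflating vector allows passing
to the complement of `x`, `A x`, `A† x` at the cost of one dimension. Without a deflating vector,
the nonnegative subspaces in all directions can be made positive definite, which is an open
condition, so that `A` can be deformed to `A - s` until a deflating vector appears. In dimension
`2 k` a deflating vector always exists, as an eigenvector of `(A + A†)⁻¹ A`.
-/

open Module ContinuousLinearMap
open scoped InnerProductSpace InnerProduct ComplexConjugate

section Subspaces

theorem exists_ne_zero_mem_mem_of_finrank_lt {K V : Type*} [DivisionRing K] [AddCommGroup V]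
    [Module K V] [FiniteDimensional K V] {S T : Submodule K V}
    (h : finrank K V < finrank K S + finrank K T) : ∃ x, x ≠ 0 ∧ x ∈ S ∧ x ∈ T := by
  by_contra! hST
  have hdisj : Disjoint S T :=
    Submodule.disjoint_def.2 fun x hxS hxT => by_contra fun hx => hST x hx hxS hxT
  exact h.not_ge (Submodule.finrank_add_finrank_le_of_disjoint hdisj)

theorem finrank_comap_subtype_of_le {K V : Type*} [Ring K] [AddCommGroup V] [Module K V]
    {S Y : Submodule K V} (h : S ≤ Y) : finrank K (S.comap Y.subtype) = finrank K S :=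
  (Submodule.comapSubtypeEquivOfLe h).finrank_eq

theorem dense_setOf_span_pair_le_span_singleton {V : Type*} [AddCommGroup V] [Module ℂ V]
    {u v w : V} (hu : u ∈ ℂ ∙ w) (hv : v ∈ ℂ ∙ w) :
    Dense {c : ℂ | Submodule.span ℂ {u, v} ≤ ℂ ∙ (c • u + conj c • v)} := by
  obtain ⟨a, rfl⟩ := Submodule.mem_span_singleton.1 hu
  obtain ⟨b, rfl⟩ := Submodule.mem_span_singleton.1 hv
  by_cases hab : a = 0 ∧ b = 0
  · simp [hab.1, hab.2]
  let f : ℂ →ₗ[ℝ] ℂ :=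
    LinearMap.mulRight ℝ a + LinearMap.mulRight ℝ b ∘ₗ Complex.conjAe.toLinearMap
  have hf : ∀ c, f c = c * a + conj c * b := fun c => rfl
  have hker : f.ker ≠ ⊤ := fun htop => hab <| by
    have hf0 : ∀ c, c * a + conj c * b = 0 := fun c => by
      rw [← hf, LinearMap.ker_eq_top.1 htop, LinearMap.zero_apply]
    have h1 := hf0 1
    have hI := hf0 Complex.I
    rw [map_one, one_mul, one_mul] at h1
    rw [Complex.conj_I, neg_mul, ← sub_eq_add_neg, ← mul_sub] at hI
    have hsub : a - b = 0 := (mul_eq_zero.1 hI).resolve_left Complex.I_ne_zero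
    constructor
    · linear_combination (h1 + hsub) / 2
    · linear_combination (h1 - hsub) / 2
  have hdense : Dense ((f.ker : Set ℂ)ᶜ) := by
    rw [← interior_eq_empty_iff_dense_compl, ← Set.not_nonempty_iff_eq_empty]
    exact fun h => hker (Submodule.eq_top_of_nonempty_interior' _ h)
  refine hdense.mono fun c hc => ?_
  have hfc : f c ≠ 0 := hc
  have hw : w ∈ ℂ ∙ (c • a • w + conj c • b • w) := Submodule.mem_span_singleton.2
    ⟨(f c)⁻¹, by rw [smul_smul c, smul_smul, ← add_smul, ← hf, inv_smul_smul₀ hfc]⟩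
  refine Submodule.span_le.2 (Set.pair_subset ?_ ?_) <;> exact Submodule.smul_mem _ _ hw

variable {𝕜 E : Type*} [RCLike 𝕜] [NormedAddCommGroup E] [InnerProductSpace 𝕜 E]

theorem mem_orthogonal_span_pair {u v x : E} :
    x ∈ (Submodule.span 𝕜 {u, v})ᗮ ↔ ⟪x, u⟫_𝕜 = 0 ∧ ⟪x, v⟫_𝕜 = 0 := by
  rw [Submodule.span_insert, ← Submodule.inf_orthogonal, Submodule.mem_inf,
    Submodule.mem_orthogonal_singleton_iff_inner_left,
    Submodule.mem_orthogonal_singleton_iff_inner_left]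

variable [FiniteDimensional 𝕜 E]

theorem finrank_le_finrank_inf_orthogonal_add (S U : Submodule 𝕜 E) :
    finrank 𝕜 S ≤ finrank 𝕜 (S ⊓ Uᗮ : Submodule 𝕜 E) + finrank 𝕜 U := by
  have hinf := Submodule.finrank_sup_add_finrank_inf_eq S Uᗮ
  have hsup := (S ⊔ Uᗮ).finrank_le
  have hperp := U.finrank_add_finrank_orthogonal
  omega

theorem finrank_le_finrank_inf_orthogonal_sup_span_singleton {S U : Submodule 𝕜 E} {x : E}
    (hU : finrank 𝕜 U ≤ 1) (hx : x ∈ S → S ≤ Uᗮ) :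
    finrank 𝕜 S ≤ finrank 𝕜 (S ⊓ Uᗮ ⊔ 𝕜 ∙ x : Submodule 𝕜 E) := by
  by_cases hxS : x ∈ S
  · exact Submodule.finrank_mono ((le_inf le_rfl (hx hxS)).trans le_sup_left)
  · rw [Submodule.finrank_sup_span_singleton fun h : x ∈ S ⊓ Uᗮ => hxS h.1]
    exact (finrank_le_finrank_inf_orthogonal_add S U).trans (by omega)

end Subspaces

section EigenvectorBasis

variable {𝕜 E ι : Type*} [RCLike 𝕜] [NormedAddCommGroup E] [InnerProductSpace 𝕜 E] [Fintype ι]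
  (b : OrthonormalBasis ι 𝕜 E)

theorem finrank_span_image_orthonormalBasis (s : Finset ι) :
    finrank 𝕜 (Submodule.span 𝕜 (b '' s)) = s.card := by
  rw [Set.image_eq_range]
  exact (finrank_span_eq_card
    (b.orthonormal.linearIndependent.comp _ Subtype.val_injective)).trans (by simp)

variable {b} {T : E →ₗ[𝕜] E} {μ : ι → ℝ}

theorem repr_apply_of_eigenvectorBasis (hT : ∀ i, T (b i) = (μ i : 𝕜) • b i) (x : E) (i : ι) :
    b.repr (T x) i = μ i * b.repr x i := by
  classical
  conv_lhs => rw [← b.sum_repr x]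
  simp [hT, mul_comm, Pi.single_apply, RCLike.real_smul_eq_coe_mul]

theorem re_inner_apply_self_of_eigenvectorBasis (hT : ∀ i, T (b i) = (μ i : 𝕜) • b i) (x : E) :
    RCLike.re ⟪x, T x⟫_𝕜 = ∑ i, μ i * ‖b.repr x i‖ ^ 2 := by
  rw [← b.repr.inner_map_map, PiLp.inner_apply, map_sum]
  refine Finset.sum_congr rfl fun i _ => ?_
  rw [repr_apply_of_eigenvectorBasis hT, RCLike.inner_apply, mul_assoc, RCLike.mul_conj,
    ← RCLike.ofReal_pow, ← RCLike.ofReal_mul, RCLike.ofReal_re]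

variable {s : Set ι} {x : E}

theorem mul_sq_norm_repr_nonneg (hs : ∀ i ∈ s, 0 ≤ μ i) (hx : x ∈ Submodule.span 𝕜 (b '' s))
    (i : ι) : 0 ≤ μ i * ‖b.repr x i‖ ^ 2 := by
  by_cases hi : i ∈ s
  · exact mul_nonneg (hs i hi) (sq_nonneg _)
  · rw [← b.coe_toBasis, b.toBasis.mem_span_image] at hx
    have hxi : b.repr x i = 0 := by
      simpa using Finsupp.notMem_support_iff.1 fun h => hi (hx h)
    simp [hxi]

theorem re_inner_apply_self_nonneg_of_mem_span (hT : ∀ i, T (b i) = (μ i : 𝕜) • b i)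
    (hs : ∀ i ∈ s, 0 ≤ μ i) (hx : x ∈ Submodule.span 𝕜 (b '' s)) :
    0 ≤ RCLike.re ⟪x, T x⟫_𝕜 := by
  rw [re_inner_apply_self_of_eigenvectorBasis hT]
  exact Finset.sum_nonneg fun i _ => mul_sq_norm_repr_nonneg hs hx i

theorem apply_eq_zero_of_mem_span_of_re_inner_eq_zero (hT : ∀ i, T (b i) = (μ i : 𝕜) • b i)
    (hs : ∀ i ∈ s, 0 ≤ μ i) (hx : x ∈ Submodule.span 𝕜 (b '' s))
    (h : RCLike.re ⟪x, T x⟫_𝕜 = 0) : T x = 0 := by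
  rw [re_inner_apply_self_of_eigenvectorBasis hT,
    Finset.sum_eq_zero_iff_of_nonneg fun i _ => mul_sq_norm_repr_nonneg hs hx i] at h
  refine b.repr.injective (PiLp.ext fun i => ?_)
  rw [repr_apply_of_eigenvectorBasis hT, map_zero]
  simpa using h i (Finset.mem_univ i)

theorem re_inner_apply_self_pos_of_mem_span (hT : ∀ i, T (b i) = (μ i : 𝕜) • b i)
    (hs : ∀ i ∈ s, 0 < μ i) (hx : x ∈ Submodule.span 𝕜 (b '' s)) (hx0 : x ≠ 0) :
    0 < RCLike.re ⟪x, T x⟫_𝕜 := by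
  have hs' : ∀ i ∈ s, 0 ≤ μ i := fun i hi => (hs i hi).le
  refine (re_inner_apply_self_nonneg_of_mem_span hT hs' hx).lt_of_ne' fun h => hx0 ?_
  have hTx := apply_eq_zero_of_mem_span_of_re_inner_eq_zero hT hs' hx h
  refine b.repr.injective (PiLp.ext fun i => ?_)
  have hi := repr_apply_of_eigenvectorBasis hT x i
  by_cases his : i ∈ s
  · simpa [hTx, (hs i his).ne'] using hi
  · rw [← b.coe_toBasis, b.toBasis.mem_span_image] at hx
    simpa using Finsupp.notMem_support_iff.1 fun h => his (hx h)

end EigenvectorBasis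

section DefiniteSubspaces

variable {E : Type*} [NormedAddCommGroup E] [InnerProductSpace ℂ E] {k : ℕ} {B : E →L[ℂ] E}

/-- The real part of the quadratic form `x ↦ ⟪x, B x⟫` is nonnegative on some subspace of dimension
at least `k`; by Courant-Fischer this says that the Hermitian part of `B` has at least `k`
nonnegative eigenvalues. -/
def HasNonnegSubspace (k : ℕ) (B : E →L[ℂ] E) : Prop :=
  ∃ S : Submodule ℂ E, k ≤ finrank ℂ S ∧ ∀ x ∈ S, 0 ≤ (⟪x, B x⟫_ℂ).re

/-- The real part of the quadratic form `x ↦ ⟪x, B x⟫` is positive definite on some subspace of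
dimension at least `k`. -/
def HasPosSubspace (k : ℕ) (B : E →L[ℂ] E) : Prop :=
  ∃ S : Submodule ℂ E, k ≤ finrank ℂ S ∧ ∀ x ∈ S, x ≠ 0 → 0 < (⟪x, B x⟫_ℂ).re

theorem HasPosSubspace.hasNonnegSubspace (h : HasPosSubspace k B) : HasNonnegSubspace k B := by
  obtain ⟨S, hk, hS⟩ := h
  refine ⟨S, hk, fun x hx => ?_⟩
  rcases eq_or_ne x 0 with rfl | hx0
  · simp
  · exact (hS x hx hx0).le

theorem HasNonnegSubspace.real_smul (h : HasNonnegSubspace k B) {r : ℝ} (hr : 0 ≤ r) :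
    HasNonnegSubspace k ((r : ℂ) • B) := by
  obtain ⟨S, hk, hS⟩ := h
  refine ⟨S, hk, fun x hx => ?_⟩
  rw [_root_.smul_apply, inner_smul_right, Complex.re_ofReal_mul]
  exact mul_nonneg hr (hS x hx)

theorem inner_real_smul_apply_self (B : E →L[ℂ] E) (r : ℝ) (x : E) :
    ⟪(r : ℂ) • x, B ((r : ℂ) • x)⟫_ℂ = ((r ^ 2 : ℝ) : ℂ) * ⟪x, B x⟫_ℂ := by
  rw [map_smul, inner_smul_left, inner_smul_right, Complex.conj_ofReal]
  push_cast
  ring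

theorem exists_unit_smul_mem (S : Submodule ℂ E) {x : E} (hx : x ∈ S) (hx0 : x ≠ 0) :
    ∃ r : ℝ, 0 < r ∧ (r : ℂ) • x ∈ (S : Set E) ∩ Metric.sphere 0 1 := by
  have hnorm : 0 < ‖x‖ := norm_pos_iff.2 hx0
  refine ⟨‖x‖⁻¹, by positivity, S.smul_mem _ hx, ?_⟩
  simp [norm_smul, hnorm.ne']

theorem isCompact_inter_sphere [FiniteDimensional ℂ E] (S : Submodule ℂ E) :
    IsCompact ((S : Set E) ∩ Metric.sphere 0 1) :=
  haveI := FiniteDimensional.proper ℂ E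
  (isCompact_sphere (0 : E) 1).inter_left S.closed_of_finiteDimensional

theorem isOpen_setOf_hasPosSubspace [FiniteDimensional ℂ E] (k : ℕ) :
    IsOpen {B : E →L[ℂ] E | HasPosSubspace k B} := by
  rw [isOpen_iff_eventually]
  rintro B ⟨S, hk, hS⟩
  have hcont : Continuous fun p : (E →L[ℂ] E) × E => (⟪p.2, p.1 p.2⟫_ℂ).re := by fun_prop
  have hev : ∀ᶠ B' in nhds B, ∀ x ∈ (S : Set E) ∩ Metric.sphere 0 1, 0 < (⟪x, B' x⟫_ℂ).re := by
    refine (isCompact_inter_sphere S).eventually_forall_of_forall_eventually fun x hx => ?_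
    have hx0 : x ≠ 0 := ne_zero_of_mem_unit_sphere ⟨x, hx.2⟩
    exact hcont.continuousAt.eventually (lt_mem_nhds (hS x hx.1 hx0))
  filter_upwards [hev] with B' hB'
  refine ⟨S, hk, fun x hx hx0 => ?_⟩
  obtain ⟨r, hr, hrx⟩ := exists_unit_smul_mem S hx hx0
  have hpos := hB' _ hrx
  rw [inner_real_smul_apply_self, Complex.re_ofReal_mul] at hpos
  exact pos_of_mul_pos_right hpos (by positivity)

variable [CompleteSpace E]

theorem re_inner_add_adjoint_apply_self (B : E →L[ℂ] E) (x : E) :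
    (⟪x, (B + B†) x⟫_ℂ).re = 2 * (⟪x, B x⟫_ℂ).re := by
  rw [_root_.add_apply, inner_add_right, adjoint_inner_right, Complex.add_re,
    ← inner_conj_symm (B x) x, Complex.conj_re]
  ring

variable [FiniteDimensional ℂ E]

theorem exists_pos_nonpos_subspaces (B : E →L[ℂ] E) :
    ∃ P M : Submodule ℂ E, finrank ℂ P + finrank ℂ M = finrank ℂ E ∧
      (∀ x ∈ P, x ≠ 0 → 0 < (⟪x, B x⟫_ℂ).re) ∧
      ∀ x ∈ M, (⟪x, B x⟫_ℂ).re ≤ 0 ∧ ((⟪x, B x⟫_ℂ).re = 0 → (B + B†) x = 0) := by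
  classical
  let T : E →ₗ[ℂ] E := (B + B† : E →L[ℂ] E)
  have hT : T.IsSymmetric := (IsSelfAdjoint.add_star_self B).isSymmetric
  let b := hT.eigenvectorBasis rfl
  let μ := hT.eigenvalues rfl
  have hb : ∀ i, T (b i) = (μ i : ℂ) • b i := hT.apply_eigenvectorBasis rfl
  have hb_neg : ∀ i, (-T) (b i) = ((-μ i : ℝ) : ℂ) • b i := fun i => by simp [hb]
  have hre : ∀ x, RCLike.re ⟪x, T x⟫_ℂ = 2 * (⟪x, B x⟫_ℂ).re := re_inner_add_adjoint_apply_self B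
  let pos : Finset (Fin (finrank ℂ E)) := {i | 0 < μ i}
  have hpos : ∀ i ∈ (pos : Set _), 0 < μ i := fun i hi => by simpa [pos] using hi
  have hneg : ∀ i ∈ ((posᶜ : Finset _) : Set _), 0 ≤ -μ i := fun i hi => by simpa [pos] using hi
  refine ⟨Submodule.span ℂ (b '' pos), Submodule.span ℂ (b '' (posᶜ : Finset _)), ?_,
    fun x hx hx0 => ?_, fun x hx => ⟨?_, fun hx0 => ?_⟩⟩
  · rw [finrank_span_image_orthonormalBasis, finrank_span_image_orthonormalBasis,
      Finset.card_add_card_compl, Fintype.card_fin]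
  · linarith [hre x, re_inner_apply_self_pos_of_mem_span hb hpos hx hx0]
  · have h := re_inner_apply_self_nonneg_of_mem_span hb_neg hneg hx
    rw [LinearMap.neg_apply, inner_neg_right, map_neg] at h
    linarith [hre x]
  · have h := apply_eq_zero_of_mem_span_of_re_inner_eq_zero hb_neg hneg hx (by
      rw [LinearMap.neg_apply, inner_neg_right, map_neg, hre, hx0, mul_zero, neg_zero])
    exact neg_eq_zero.1 h

theorem hasNonnegSubspace_iff_not_hasPosSubspace_neg :
    HasNonnegSubspace k B ↔ ¬ HasPosSubspace (finrank ℂ E + 1 - k) (-B) := by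
  constructor
  · rintro ⟨S, hk, hS⟩ ⟨T, hT_dim, hT⟩
    have hS_le := S.finrank_le
    obtain ⟨x, hx0, hxS, hxT⟩ := exists_ne_zero_mem_mem_of_finrank_lt (S := S) (T := T) (by omega)
    have hneg := hT x hxT hx0
    rw [_root_.neg_apply, inner_neg_right, Complex.neg_re] at hneg
    linarith [hS x hxS]
  · intro h
    obtain ⟨P, M, hdim, hP, hM⟩ := exists_pos_nonpos_subspaces (-B)
    refine ⟨M, ?_, fun x hx => ?_⟩
    · by_contra hk
      exact h ⟨P, by omega, hP⟩
    · simpa using (hM x hx).1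

theorem isClosed_setOf_hasNonnegSubspace (k : ℕ) :
    IsClosed {B : E →L[ℂ] E | HasNonnegSubspace k B} := by
  simp only [hasNonnegSubspace_iff_not_hasPosSubspace_neg]
  exact ((isOpen_setOf_hasPosSubspace _).preimage continuous_neg).isClosed_compl

end DefiniteSubspaces

section Strictness

theorem exists_pos_forall_mem_lt_mul {X : Type*} [TopologicalSpace X] {K : Set X}
    (hK : IsCompact K) {f g : X → ℝ} (hf : Continuous f) (hg : Continuous g)
    (hf_nonpos : ∀ x ∈ K, f x ≤ 0) (hg_pos : ∀ x ∈ K, f x = 0 → 0 < g x) :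
    ∃ t > 0, ∀ x ∈ K, f x < t * g x := by
  suffices h : ∀ᶠ t in nhdsWithin (0 : ℝ) (Set.Ioi 0), ∀ x ∈ K, f x < t * g x by
    obtain ⟨t, ht, ht_pos⟩ := (h.and self_mem_nhdsWithin).exists
    exact ⟨t, ht_pos, ht⟩
  refine hK.induction_on (p := fun s => ∀ᶠ t in nhdsWithin (0 : ℝ) (Set.Ioi 0),
    ∀ x ∈ s, f x < t * g x) (by simp) (fun s s' hss' h => h.mono fun t ht x hx => ht x (hss' hx))
    (fun s s' h h' => ?_) fun x hx => ?_
  · filter_upwards [h, h'] with t ht ht' x hx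
    exact hx.elim (ht x) (ht' x)
  rcases (hf_nonpos x hx).lt_or_eq with hneg | hzero
  · have hcont : Continuous fun p : ℝ × X => p.1 * g p.2 - f p.2 := by fun_prop
    have hev : ∀ᶠ p in nhds (0 : ℝ) ×ˢ nhds x, 0 < p.1 * g p.2 - f p.2 := by
      rw [← nhds_prod_eq]
      exact hcont.continuousAt.eventually (lt_mem_nhds (by simpa using hneg))
    obtain ⟨near_zero, h_zero, near_x, h_x, h⟩ := Filter.eventually_prod_iff.1 hev
    refine ⟨{y | near_x y}, mem_nhdsWithin_of_mem_nhds h_x, ?_⟩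
    filter_upwards [nhdsWithin_le_nhds h_zero] with t ht y hy
    exact sub_pos.1 (h ht hy)
  · refine ⟨{y | 0 < g y} ∩ K, Filter.inter_mem (mem_nhdsWithin_of_mem_nhds
      (hg.continuousAt.eventually (lt_mem_nhds (hg_pos x hx hzero)))) self_mem_nhdsWithin, ?_⟩
    filter_upwards [self_mem_nhdsWithin] with t ht y hy
    exact (hf_nonpos y hy.2).trans_lt (mul_pos ht hy.1)

theorem exists_forall_ne_zero_mul_pos {V : Type*} [NormedAddCommGroup V] [NormedSpace ℂ V]
    {f : V → ℝ} (hf : Continuous f) (hf_ne : ∀ x ≠ 0, f x ≠ 0) :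
    ∃ ε : ℝ, ∀ x ≠ 0, 0 < ε * f x := by
  rcases subsingleton_or_nontrivial V with _ | _
  · exact ⟨0, fun x hx => (hx (Subsingleton.elim x 0)).elim⟩
  have hconn : IsPreconnected ({0}ᶜ : Set V) :=
    (isConnected_compl_singleton_of_one_lt_rank (by
      rw [rank_real_of_complex]
      exact Cardinal.one_lt_two.trans_le (le_mul_of_one_le_right' <|
        Cardinal.one_le_iff_ne_zero.2 rank_pos.ne')) 0).isPreconnected
  by_cases hpos : ∀ x ≠ 0, 0 < f x
  · exact ⟨1, by simpa using hpos⟩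
  · push Not at hpos
    obtain ⟨y, hy0, hy⟩ := hpos
    refine ⟨-1, fun x hx0 => ?_⟩
    by_contra! hx
    obtain ⟨z, hz0, hz⟩ := hconn.intermediate_value hy0 hx0 hf.continuousOn
      ⟨hy, by linarith⟩
    exact hf_ne z hz0 hz

variable {E : Type*} [NormedAddCommGroup E] [InnerProductSpace ℂ E] {k : ℕ} {A : E →L[ℂ] E}

/-- Every element of the complex line spanned by `A`, hence every rotation of `A`, has a nonnegative
subspace of dimension at least `k`. -/
def IsNonnegInEveryDirection (k : ℕ) (A : E →L[ℂ] E) : Prop :=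
  ∀ c : ℂ, HasNonnegSubspace k (c • A)

theorem IsNonnegInEveryDirection.smul (h : IsNonnegInEveryDirection k A) (c : ℂ) :
    IsNonnegInEveryDirection k (c • A) := fun d => by
  rw [smul_smul]
  exact h _

theorem isNonnegInEveryDirection_of_forall_norm_eq_one
    (h : ∀ c : ℂ, ‖c‖ = 1 → HasNonnegSubspace k (c • A)) : IsNonnegInEveryDirection k A := by
  intro c
  rcases eq_or_ne c 0 with rfl | hc
  · simpa using (h 1 norm_one).real_smul le_rfl
  · have hc' : (‖c‖ : ℂ) ≠ 0 := by simpa using hc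
    have := (h (c / ‖c‖) (by simp [hc])).real_smul (norm_nonneg c)
    rwa [smul_smul, mul_div_cancel₀ _ hc'] at this

variable [CompleteSpace E]

theorem isClosed_setOf_isNonnegInEveryDirection [FiniteDimensional ℂ E] (k : ℕ) :
    IsClosed {A : E →L[ℂ] E | IsNonnegInEveryDirection k A} := by
  simp only [IsNonnegInEveryDirection, Set.ofPred_forall]
  exact isClosed_iInter fun c =>
    (isClosed_setOf_hasNonnegSubspace k).preimage (continuous_const_smul c)

/-- A nonzero isotropic vector `x` of `A` for which `A x` and `A† x` lie on a common complex line.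
Passing to the orthogonal complement of that line and of `x` removes only one dimension from the
isotropic subspaces of `A`. -/
def IsDeflatingVector (A : E →L[ℂ] E) (x : E) : Prop :=
  x ≠ 0 ∧ ⟪x, A x⟫_ℂ = 0 ∧ ∃ w : E, A x ∈ ℂ ∙ w ∧ (A†) x ∈ ℂ ∙ w

theorem IsDeflatingVector.of_smul {c : ℂ} (hc : c ≠ 0) {x : E}
    (h : IsDeflatingVector (c • A) x) : IsDeflatingVector A x := by
  obtain ⟨hx0, hx, w, hw, hw'⟩ := h
  rw [_root_.smul_apply] at hx hw
  rw [map_smulₛₗ, _root_.smul_apply] at hw'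
  refine ⟨hx0, by simpa [inner_smul_right, hc] using hx, w, ?_, ?_⟩
  · exact (Submodule.smul_mem_iff _ hc).1 hw
  · exact (Submodule.smul_mem_iff _ ((_root_.map_ne_zero _).2 hc)).1 hw'

theorem re_inner_apply_self_eq_zero_of_add_adjoint_apply_eq_zero {x : E}
    (hx : (A + A†) x = 0) : (⟪x, A x⟫_ℂ).re = 0 := by
  have h := re_inner_add_adjoint_apply_self A x
  rw [hx, inner_zero_right, Complex.zero_re] at h
  linarith

theorem im_inner_apply_self_ne_zero_of_add_adjoint_apply_eq_zero
    (hA : ∀ x, ¬ IsDeflatingVector A x) {x : E} (hx0 : x ≠ 0) (hx : (A + A†) x = 0) :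
    (⟪x, A x⟫_ℂ).im ≠ 0 := fun him => by
  refine hA x ⟨hx0, Complex.ext
    (re_inner_apply_self_eq_zero_of_add_adjoint_apply_eq_zero hx) him, A x,
    Submodule.mem_span_singleton_self _, ?_⟩
  rw [eq_neg_of_add_eq_zero_right (show A x + (A†) x = 0 from hx)]
  exact neg_mem (Submodule.mem_span_singleton_self _)

variable [FiniteDimensional ℂ E]

/-- If `P` is a maximal positive subspace of `A`, then rotating `A` slightly, towards the side where
the form is positive on the kernel of `A + A†`, makes it negative on a complement of `P`. -/
theorem IsNonnegInEveryDirection.hasPosSubspace (h : IsNonnegInEveryDirection k A)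
    (hA : ∀ x, ¬ IsDeflatingVector A x) : HasPosSubspace k A := by
  obtain ⟨P, M, hdim, hP, hM⟩ := exists_pos_nonpos_subspaces A
  obtain ⟨ε, hε⟩ : ∃ ε : ℝ, ∀ x : (A + A†).ker, x ≠ 0 → 0 < ε * (⟪(x : E), A x⟫_ℂ).im :=
    exists_forall_ne_zero_mul_pos (by fun_prop) fun x hx0 =>
      im_inner_apply_self_ne_zero_of_add_adjoint_apply_eq_zero hA (by simpa using hx0) x.2
  obtain ⟨t, -, ht⟩ : ∃ t > 0, ∀ x ∈ (M : Set E) ∩ Metric.sphere 0 1,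
      (⟪x, A x⟫_ℂ).re < t * (ε * (⟪x, A x⟫_ℂ).im) := by
    refine exists_pos_forall_mem_lt_mul (isCompact_inter_sphere M) (by fun_prop) (by fun_prop)
      (fun x hx => (hM x hx.1).1) fun x hx hre => hε ⟨x, (hM x hx.1).2 hre⟩ fun h0 => ?_
    exact ne_zero_of_mem_unit_sphere ⟨x, hx.2⟩ (congrArg Subtype.val h0)
  refine ⟨P, ?_, hP⟩
  by_contra! hPk
  obtain ⟨S, hSk, hS⟩ := h (1 + ((t * ε : ℝ) : ℂ) * Complex.I)
  obtain ⟨x, hx0, hxS, hxM⟩ := exists_ne_zero_mem_mem_of_finrank_lt (S := S) (T := M) (by omega)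
  obtain ⟨r, -, hrM, hr1⟩ := exists_unit_smul_mem M hxM hx0
  have hnonneg := hS _ (S.smul_mem (r : ℂ) hxS)
  rw [_root_.smul_apply, inner_smul_right] at hnonneg
  set q := ⟪(r : ℂ) • x, A ((r : ℂ) • x)⟫_ℂ
  have hre : ((1 + ((t * ε : ℝ) : ℂ) * Complex.I) * q).re = q.re - t * (ε * q.im) := by
    simp only [Complex.mul_re, Complex.add_re, Complex.add_im, Complex.one_re, Complex.one_im,
      Complex.ofReal_re, Complex.ofReal_im, Complex.im_ofReal_mul, Complex.I_re, Complex.I_im]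
    ring
  linarith [ht _ ⟨hrM, hr1⟩]

theorem IsNonnegInEveryDirection.hasPosSubspace_smul (h : IsNonnegInEveryDirection k A)
    (hA : ∀ x, ¬ IsDeflatingVector A x) {c : ℂ} (hc : c ≠ 0) : HasPosSubspace k (c • A) :=
  (h.smul c).hasPosSubspace fun x hx => hA x (hx.of_smul hc)

end Strictness

section EvenDimension

variable {E : Type*} [NormedAddCommGroup E] [InnerProductSpace ℂ E] [CompleteSpace E] {k : ℕ}
  {A B : E →L[ℂ] E}

theorem inner_add_adjoint_apply_comm (B : E →L[ℂ] E) (x y : E) :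
    ⟪x, (B + B†) y⟫_ℂ = ⟪(B + B†) x, y⟫_ℂ :=
  ((IsSelfAdjoint.add_star_self B).isSymmetric x y).symm

theorem re_inner_add_apply_self_of_add_adjoint_apply_eq_zero {z : E} (hz : (B + B†) z = 0) (x : E) :
    (⟪x + z, B (x + z)⟫_ℂ).re = (⟪x, B x⟫_ℂ).re := by
  have hz' : ⟪z, (B + B†) x⟫_ℂ = 0 := by
    rw [inner_add_adjoint_apply_comm, hz, inner_zero_left]
  have h := re_inner_add_adjoint_apply_self B (x + z)
  rw [map_add (B + B†) x, hz, add_zero, inner_add_left, hz', add_zero] at h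
  linarith [re_inner_add_adjoint_apply_self B x]

/-- Otherwise `x ≠ 0`, `1 - μ = conj μ`, and `c = i (conj μ)` contradicts the hypothesis. -/
theorem inner_apply_self_eq_zero_of_apply_eq_smul
    (hA : ∀ c : ℂ, c ≠ 0 → ∀ z, (c • A + (c • A)†) z = 0 → z = 0) {μ : ℂ} {x : E}
    (hx : A x = μ • (A + A†) x) (hx' : (A†) x = (1 - μ) • (A + A†) x) : ⟪x, A x⟫_ℂ = 0 := by
  by_contra hw
  set y := (A + A†) x
  have hμy : ⟪x, A x⟫_ℂ = μ * ⟪x, y⟫_ℂ := by rw [hx, inner_smul_right]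
  have hy_real : conj ⟪x, y⟫_ℂ = ⟪x, y⟫_ℂ := by
    rw [inner_conj_symm, inner_add_adjoint_apply_comm]
  have hμ_conj : 1 - μ = conj μ := by
    refine mul_right_cancel₀ (right_ne_zero_of_mul (hμy ▸ hw)) ?_
    rw [← inner_smul_right, ← hx', adjoint_inner_right, ← inner_conj_symm, hμy, map_mul, hy_real]
  have hμ0 : conj μ ≠ 0 := by simpa using left_ne_zero_of_mul (hμy ▸ hw)
  have hx0 : x = 0 := by
    refine hA (Complex.I * conj μ) (mul_ne_zero Complex.I_ne_zero hμ0) x ?_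
    rw [map_smulₛₗ, _root_.add_apply, _root_.smul_apply, _root_.smul_apply, hx, hx', hμ_conj,
      smul_smul, smul_smul, ← add_smul, map_mul, Complex.conj_I, Complex.conj_conj]
    convert zero_smul ℂ y using 2
    ring
  exact hw (by rw [hx0, inner_zero_left])

variable [FiniteDimensional ℂ E]

theorem eq_zero_of_add_adjoint_apply_eq_zero (hB : HasPosSubspace k B)
    (hB_neg : HasPosSubspace k (-B)) (hE : finrank ℂ E ≤ 2 * k) {z : E} (hz : (B + B†) z = 0) :
    z = 0 := by
  obtain ⟨S, hSk, hS⟩ := hB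
  obtain ⟨T, hTk, hT⟩ := hB_neg
  by_contra hz0
  have hzS : z ∉ S := fun hzS => by
    have h := re_inner_add_apply_self_of_add_adjoint_apply_eq_zero hz 0
    simp only [zero_add, map_zero, inner_zero_left, Complex.zero_re] at h
    exact (hS z hzS hz0).ne' h
  have hdim := Submodule.finrank_sup_span_singleton hzS
  obtain ⟨v, hv0, hvS, hvT⟩ :=
    exists_ne_zero_mem_mem_of_finrank_lt (S := S ⊔ ℂ ∙ z) (T := T) (by omega)
  obtain ⟨s, hs, w, hw, rfl⟩ := Submodule.mem_sup.1 hvS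
  obtain ⟨t, rfl⟩ := Submodule.mem_span_singleton.1 hw
  have htz : (B + B†) (t • z) = 0 := by rw [map_smul, hz, smul_zero]
  have hneg := hT _ hvT hv0
  rw [_root_.neg_apply, inner_neg_right, Complex.neg_re,
    re_inner_add_apply_self_of_add_adjoint_apply_eq_zero htz] at hneg
  rcases eq_or_ne s 0 with rfl | hs0
  · simp at hneg
  · linarith [hS s hs hs0]

theorem exists_apply_eq_smul_add_adjoint_apply [Nontrivial E]
    (hA : ∀ z, (A + A†) z = 0 → z = 0) : ∃ μ : ℂ, ∃ x ≠ 0, A x = μ • (A + A†) x := by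
  let T : E →ₗ[ℂ] E := (A + A† : E →L[ℂ] E)
  let e := LinearEquiv.ofInjectiveEndo T ((injective_iff_map_eq_zero T).2 hA)
  obtain ⟨μ, hμ⟩ := Module.End.exists_eigenvalue ((e.symm : E →ₗ[ℂ] E) ∘ₗ (A : E →ₗ[ℂ] E))
  obtain ⟨x, hx⟩ := hμ.exists_hasEigenvector
  refine ⟨μ, x, hx.2, ?_⟩
  rw [show (A + A†) x = e x from rfl, ← map_smul]
  exact e.symm_apply_eq.1 hx.apply_eq_smul

theorem exists_isDeflatingVector_of_forall_hasPosSubspace_smul (hE : finrank ℂ E = 2 * k)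
    (hk : 0 < k) (hA : ∀ c : ℂ, c ≠ 0 → HasPosSubspace k (c • A)) :
    ∃ x, IsDeflatingVector A x := by
  have hker : ∀ c : ℂ, c ≠ 0 → ∀ z, (c • A + (c • A)†) z = 0 → z = 0 := fun c hc z hz =>
    eq_zero_of_add_adjoint_apply_eq_zero (hA c hc)
      (by simpa only [neg_smul] using hA (-c) (neg_ne_zero.2 hc)) hE.le hz
  have : Nontrivial E := nontrivial_of_finrank_pos (R := ℂ) (by omega)
  obtain ⟨μ, x, hx0, hx⟩ := exists_apply_eq_smul_add_adjoint_apply (A := A) fun z hz =>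
    hker 1 one_ne_zero z (by rwa [one_smul])
  have hx' : (A†) x = (1 - μ) • (A + A†) x := by
    rw [sub_smul, one_smul, ← hx]
    exact (add_sub_cancel_left (A x) ((A†) x)).symm
  exact ⟨x, hx0, inner_apply_self_eq_zero_of_apply_eq_smul hker hx hx', (A + A†) x,
    Submodule.mem_span_singleton.2 ⟨μ, hx.symm⟩,
    Submodule.mem_span_singleton.2 ⟨1 - μ, hx'.symm⟩⟩

theorem IsNonnegInEveryDirection.exists_isDeflatingVector (h : IsNonnegInEveryDirection k A)
    (hE : finrank ℂ E = 2 * k) (hk : 0 < k) : ∃ x, IsDeflatingVector A x := by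
  by_contra! hA
  obtain ⟨x, hx⟩ := exists_isDeflatingVector_of_forall_hasPosSubspace_smul hE hk
    fun c hc => h.hasPosSubspace_smul hA hc
  exact hA x hx

end EvenDimension

section Compression

variable {E : Type*} [NormedAddCommGroup E] [InnerProductSpace ℂ E] {k : ℕ} {A : E →L[ℂ] E}

/-- `A` vanishes as a quadratic form, hence as a sesquilinear form, on some subspace of dimension
`k`. -/
def HasIsotropicSubspace (k : ℕ) (A : E →L[ℂ] E) : Prop :=
  ∃ S : Submodule ℂ E, finrank ℂ S = k ∧ ∀ x ∈ S, ⟪x, A x⟫_ℂ = 0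

/-- The compression of `A` to the subspace `Y`. -/
noncomputable def compression (A : E →L[ℂ] E) (Y : Submodule ℂ E) [Y.HasOrthogonalProjection] :
    Y →L[ℂ] Y :=
  Y.orthogonalProjectionOnto ∘L A ∘L Y.subtypeL

variable (A) {Y : Submodule ℂ E} [Y.HasOrthogonalProjection]

theorem inner_compression_apply_self (x : Y) :
    ⟪x, compression A Y x⟫_ℂ = ⟪(x : E), A x⟫_ℂ := by
  simp [compression]

theorem compression_smul (c : ℂ) : compression (c • A) Y = c • compression A Y := by
  ext x
  simp [compression]

variable {A}

theorem hasNonnegSubspace_compression {S : Submodule ℂ E} (hk : k ≤ finrank ℂ S) (hSY : S ≤ Y)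
    (hS : ∀ x ∈ S, 0 ≤ (⟪x, A x⟫_ℂ).re) : HasNonnegSubspace k (compression A Y) :=
  ⟨S.comap Y.subtype, by rwa [finrank_comap_subtype_of_le hSY], fun x hx => by
    rw [inner_compression_apply_self]
    exact hS x hx⟩

theorem HasIsotropicSubspace.exists_le_of_compression
    (h : HasIsotropicSubspace k (compression A Y)) :
    ∃ S ≤ Y, finrank ℂ S = k ∧ ∀ x ∈ S, ⟪x, A x⟫_ℂ = 0 := by
  obtain ⟨S, hSk, hS⟩ := h
  refine ⟨S.map Y.subtype, Submodule.map_subtype_le Y S,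
    (Submodule.finrank_map_subtype_eq Y S).trans hSk, ?_⟩
  rintro _ ⟨y, hy, rfl⟩
  exact (inner_compression_apply_self A y).symm.trans (hS y hy)

end Compression

section Deflation

variable {E : Type*} [NormedAddCommGroup E] [InnerProductSpace ℂ E] [CompleteSpace E] {k : ℕ}
  {A : E →L[ℂ] E} {x : E}

theorem inner_apply_add_smul (hx : ⟪x, A x⟫_ℂ = 0) (s : E) (t : ℂ) :
    ⟪s + t • x, A (s + t • x)⟫_ℂ = ⟪s, A s⟫_ℂ + t * ⟪s, A x⟫_ℂ + conj (t * ⟪s, (A†) x⟫_ℂ) := by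
  rw [map_add, map_smul, inner_add_left, inner_add_right, inner_add_right, inner_smul_left,
    inner_smul_left, inner_smul_right, inner_smul_right, hx, map_mul, adjoint_inner_right,
    inner_conj_symm]
  ring

theorem inner_apply_add_smul_of_mem_orthogonal (hx : ⟪x, A x⟫_ℂ = 0) {s : E}
    (hs : s ∈ (Submodule.span ℂ {A x, (A†) x})ᗮ) (t : ℂ) :
    ⟪s + t • x, A (s + t • x)⟫_ℂ = ⟪s, A s⟫_ℂ := by
  obtain ⟨hs, hs'⟩ := mem_orthogonal_span_pair.1 hs
  rw [inner_apply_add_smul hx, hs, hs', mul_zero, map_zero, add_zero, add_zero]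

/-- The equality case of the Cauchy-Schwarz inequality for a semidefinite Hermitian form. -/
theorem inner_add_adjoint_apply_eq_zero_of_nonneg {S : Submodule ℂ E}
    (hS : ∀ s ∈ S, 0 ≤ (⟪s, A s⟫_ℂ).re) (hxS : x ∈ S) (hx : ⟪x, A x⟫_ℂ = 0) {s : E}
    (hs : s ∈ S) : ⟪s, (A + A†) x⟫_ℂ = 0 := by
  set w := ⟪s, (A + A†) x⟫_ℂ with hw
  have hline : ∀ t : ℂ, 0 ≤ (⟪s, A s⟫_ℂ).re + (t * w).re := fun t => by
    have h := hS (s + t • x) (S.add_mem hs (S.smul_mem t hxS))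
    rw [inner_apply_add_smul hx, Complex.add_re, Complex.add_re, Complex.conj_re] at h
    rwa [hw, _root_.add_apply, inner_add_right, mul_add, Complex.add_re, ← add_assoc]
  by_contra hw0
  have h := hline ((-((⟪s, A s⟫_ℂ).re + 1) : ℝ) * w⁻¹)
  rw [inv_mul_cancel_right₀ hw0, Complex.ofReal_re] at h
  linarith

/-- The orthogonal complement of `x`, `A x` and `A† x`. -/
noncomputable def deflation (A : E →L[ℂ] E) (x : E) : Submodule ℂ E :=
  (Submodule.span ℂ {A x, (A†) x})ᗮ ⊓ (ℂ ∙ x)ᗮ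

theorem IsDeflatingVector.finrank_span_le_one (hx : IsDeflatingVector A x) :
    finrank ℂ (Submodule.span ℂ {A x, (A†) x}) ≤ 1 := by
  obtain ⟨-, -, w, hw, hw'⟩ := hx
  exact (Submodule.finrank_mono (Submodule.span_le.2 (Set.pair_subset hw hw'))).trans
    (by simpa using finrank_span_le_card (R := ℂ) {w})

theorem IsDeflatingVector.mem_orthogonal (hx : IsDeflatingVector A x) :
    x ∈ (Submodule.span ℂ {A x, (A†) x})ᗮ := by
  refine mem_orthogonal_span_pair.2 ⟨hx.2.1, ?_⟩
  rw [adjoint_inner_right, ← inner_conj_symm, hx.2.1, map_zero]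

variable [FiniteDimensional ℂ E]

/-- For `c` as in the hypothesis, a nonnegative subspace of `c • A` that contains `x` is orthogonal
to `A x` and `A† x`; any other one may be sheared along `x` into the complement. -/
theorem HasNonnegSubspace.compression_deflation (hx : IsDeflatingVector A x) {c : ℂ}
    (hc : Submodule.span ℂ {A x, (A†) x} ≤ ℂ ∙ (c • A x + conj c • (A†) x))
    (h : HasNonnegSubspace (k + 1) (c • A)) :
    HasNonnegSubspace k (c • compression A (deflation A x)) := by
  obtain ⟨S, hSk, hS⟩ := h
  set U := Submodule.span ℂ {A x, (A†) x}
  have hS_orth : x ∈ S → S ≤ Uᗮ := fun hxS s hs => by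
    refine Submodule.orthogonal_le hc (Submodule.mem_orthogonal_singleton_iff_inner_left.2 ?_)
    have h := inner_add_adjoint_apply_eq_zero_of_nonneg hS hxS
      (by rw [_root_.smul_apply, inner_smul_right, hx.2.1, mul_zero]) hs
    rwa [map_smulₛₗ] at h
  have hsup : S ⊓ Uᗮ ⊔ ℂ ∙ x ≤ Uᗮ :=
    sup_le inf_le_right ((Submodule.span_singleton_le_iff_mem _ _).2 hx.mem_orthogonal)
  rw [← compression_smul]
  refine hasNonnegSubspace_compression (S := (S ⊓ Uᗮ ⊔ ℂ ∙ x) ⊓ (ℂ ∙ x)ᗮ) ?_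
    (inf_le_inf_right _ hsup) fun y hy => ?_
  · have hdim := finrank_le_finrank_inf_orthogonal_sup_span_singleton hx.finrank_span_le_one hS_orth
    have hdim' := finrank_le_finrank_inf_orthogonal_add (S ⊓ Uᗮ ⊔ ℂ ∙ x) (ℂ ∙ x)
    rw [finrank_span_singleton hx.1] at hdim'
    exact Nat.le_of_add_le_add_right ((hSk.trans hdim).trans hdim')
  · obtain ⟨s, hs, z, hz, rfl⟩ := Submodule.mem_sup.1 hy.1
    obtain ⟨t, rfl⟩ := Submodule.mem_span_singleton.1 hz
    have hs_nonneg := hS s hs.1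
    rw [_root_.smul_apply, inner_smul_right] at hs_nonneg ⊢
    rwa [inner_apply_add_smul_of_mem_orthogonal hx.2.1 hs.2]

theorem IsNonnegInEveryDirection.compression_deflation (h : IsNonnegInEveryDirection (k + 1) A)
    (hx : IsDeflatingVector A x) :
    IsNonnegInEveryDirection k (compression A (deflation A x)) := by
  obtain ⟨-, -, w, hw, hw'⟩ := id hx
  have hclosed : IsClosed {c : ℂ | HasNonnegSubspace k (c • compression A (deflation A x))} :=
    (isClosed_setOf_hasNonnegSubspace k).preimage (continuous_id.smul continuous_const)
  intro c
  exact hclosed.closure_subset_iff.2 (fun d hd => (h d).compression_deflation hx hd)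
    (dense_setOf_span_pair_le_span_singleton hw hw' c)

theorem HasIsotropicSubspace.of_compression_deflation (hx : IsDeflatingVector A x)
    (h : HasIsotropicSubspace k (compression A (deflation A x))) :
    HasIsotropicSubspace (k + 1) A := by
  obtain ⟨S, hSY, hSk, hS⟩ := h.exists_le_of_compression
  have hxS : x ∉ S := fun hxS =>
    hx.1 (inner_self_eq_zero.1 (Submodule.mem_orthogonal_singleton_iff_inner_left.1 (hSY hxS).2))
  refine ⟨S ⊔ ℂ ∙ x, by rw [Submodule.finrank_sup_span_singleton hxS, hSk], fun y hy => ?_⟩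
  obtain ⟨s, hs, z, hz, rfl⟩ := Submodule.mem_sup.1 hy
  obtain ⟨t, rfl⟩ := Submodule.mem_span_singleton.1 hz
  rw [inner_apply_add_smul_of_mem_orthogonal hx.2.1 (hSY hs).1, hS s hs]

end Deflation

section Deformation

variable {E : Type*} [NormedAddCommGroup E] [InnerProductSpace ℂ E] {k : ℕ} {A : E →L[ℂ] E}

theorem inner_sub_smul_id_apply_self (A : E →L[ℂ] E) (s : ℝ) (x : E) :
    ⟪x, (A - (s : ℂ) • ContinuousLinearMap.id ℂ E) x⟫_ℂ =
      ⟪x, A x⟫_ℂ - ((s * ‖x‖ ^ 2 : ℝ) : ℂ) := by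
  rw [_root_.sub_apply, _root_.smul_apply, ContinuousLinearMap.id_apply, inner_sub_right,
    inner_smul_right, inner_self_eq_norm_sq_to_K, Complex.ofReal_mul, Complex.ofReal_pow]
  rfl

theorem HasNonnegSubspace.le_norm_of_sub_smul_id (hk : 0 < k) {s : ℝ}
    (h : HasNonnegSubspace k (A - (s : ℂ) • ContinuousLinearMap.id ℂ E)) : s ≤ ‖A‖ := by
  obtain ⟨S, hSk, hS⟩ := h
  have hS_bot : S ≠ ⊥ := by
    rintro rfl
    exact hk.not_ge (hSk.trans_eq (finrank_bot ℂ E))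
  obtain ⟨x, hxS, hx0⟩ := Submodule.exists_mem_ne_zero_of_ne_bot hS_bot
  have hlower := hS x hxS
  rw [inner_sub_smul_id_apply_self, Complex.sub_re, Complex.ofReal_re, sub_nonneg] at hlower
  have hupper : (⟪x, A x⟫_ℂ).re ≤ ‖A‖ * ‖x‖ ^ 2 := calc
    (⟪x, A x⟫_ℂ).re ≤ ‖x‖ * ‖A x‖ := (Complex.re_le_norm _).trans (norm_inner_le_norm _ _)
    _ ≤ ‖x‖ * (‖A‖ * ‖x‖) := by gcongr; exact A.le_opNorm x
    _ = ‖A‖ * ‖x‖ ^ 2 := by ring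
  exact le_of_mul_le_mul_right (hlower.trans hupper) (by positivity)

variable [CompleteSpace E] [FiniteDimensional ℂ E]

theorem IsNonnegInEveryDirection.eventually_nhds (h : IsNonnegInEveryDirection k A)
    (hA : ∀ x, ¬ IsDeflatingVector A x) : ∀ᶠ A' in nhds A, IsNonnegInEveryDirection k A' := by
  have hcircle : ∀ᶠ A' in nhds A, ∀ c ∈ Metric.sphere (0 : ℂ) 1, HasPosSubspace k (c • A') := by
    refine (isCompact_sphere (0 : ℂ) 1).eventually_forall_of_forall_eventually fun c hc => ?_
    have hc0 : c ≠ 0 := ne_zero_of_mem_unit_sphere ⟨c, hc⟩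
    have hcont : Continuous fun p : (E →L[ℂ] E) × ℂ => p.2 • p.1 := by fun_prop
    exact ((isOpen_setOf_hasPosSubspace k).preimage hcont).mem_nhds (h.hasPosSubspace_smul hA hc0)
  filter_upwards [hcircle] with A' hA'
  exact isNonnegInEveryDirection_of_forall_norm_eq_one fun c hc =>
    (hA' c (mem_sphere_zero_iff_norm.2 hc)).hasNonnegSubspace

theorem IsNonnegInEveryDirection.exists_isDeflatingVector_sub_smul_id (hk : 0 < k)
    (h : IsNonnegInEveryDirection k A) :
    ∃ s : ℝ, 0 ≤ s ∧ IsNonnegInEveryDirection k (A - (s : ℂ) • ContinuousLinearMap.id ℂ E) ∧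
      ∃ x, IsDeflatingVector (A - (s : ℂ) • ContinuousLinearMap.id ℂ E) x := by
  let F : ℝ → E →L[ℂ] E := fun s => A - (s : ℂ) • ContinuousLinearMap.id ℂ E
  have hF : Continuous F := by fun_prop
  let G : Set ℝ := {s | 0 ≤ s ∧ IsNonnegInEveryDirection k (F s)}
  have hG_closed : IsClosed G :=
    isClosed_Ici.inter ((isClosed_setOf_isNonnegInEveryDirection k).preimage hF)
  have hG_bdd : BddAbove G := ⟨‖A‖, fun s hs =>
    HasNonnegSubspace.le_norm_of_sub_smul_id hk (by simpa only [one_smul] using hs.2 1)⟩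
  have hG_zero : (0 : ℝ) ∈ G := ⟨le_rfl, by simpa [F] using h⟩
  obtain ⟨hs_nonneg, hs⟩ := hG_closed.csSup_mem ⟨0, hG_zero⟩ hG_bdd
  refine ⟨sSup G, hs_nonneg, hs, ?_⟩
  by_contra! hdefl
  have hev : ∀ᶠ s in nhdsWithin (sSup G) (Set.Ioi (sSup G)), IsNonnegInEveryDirection k (F s) :=
    nhdsWithin_le_nhds (hF.continuousAt.eventually (hs.eventually_nhds hdefl))
  obtain ⟨s, hFs, hs_gt⟩ := (hev.and self_mem_nhdsWithin).exists
  exact (le_csSup hG_bdd ⟨hs_nonneg.trans hs_gt.le, hFs⟩).not_gt hs_gt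

theorem IsNonnegInEveryDirection.exists_inner_eq_mul_norm_sq
    (ih : ∀ (Y : Submodule ℂ E) (B : Y →L[ℂ] Y),
      IsNonnegInEveryDirection k B → HasIsotropicSubspace k B)
    (h : IsNonnegInEveryDirection (k + 1) A) :
    ∃ s : ℝ, 0 ≤ s ∧ ∃ S : Submodule ℂ E, finrank ℂ S = k + 1 ∧
      ∀ x ∈ S, ⟪x, A x⟫_ℂ = ((s * ‖x‖ ^ 2 : ℝ) : ℂ) := by
  obtain ⟨s, hs, hAs, x, hx⟩ := h.exists_isDeflatingVector_sub_smul_id k.succ_pos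
  obtain ⟨S, hSk, hS⟩ := HasIsotropicSubspace.of_compression_deflation hx
    (ih _ _ (hAs.compression_deflation hx))
  refine ⟨s, hs, S, hSk, fun y hy => ?_⟩
  rw [← sub_eq_zero, ← inner_sub_smul_id_apply_self, hS y hy]

end Deformation

section LiSze

variable {E : Type*} [NormedAddCommGroup E] [InnerProductSpace ℂ E] {k : ℕ} {A : E →L[ℂ] E}
  {S T : Submodule ℂ E} {a b : ℝ}

theorem disjoint_of_inner_apply_self_eq_mul_norm_sq (ha : 0 < a) (hb : b < 0)
    (hS : ∀ x ∈ S, ⟪x, A x⟫_ℂ = ((a * ‖x‖ ^ 2 : ℝ) : ℂ))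
    (hT : ∀ x ∈ T, ⟪x, A x⟫_ℂ = ((b * ‖x‖ ^ 2 : ℝ) : ℂ)) : Disjoint S T := by
  refine Submodule.disjoint_def.2 fun x hxS hxT => ?_
  have h : a * ‖x‖ ^ 2 = b * ‖x‖ ^ 2 := by
    exact_mod_cast (hS x hxS).symm.trans (hT x hxT)
  by_contra hx0
  have hx : 0 < ‖x‖ ^ 2 := by positivity
  nlinarith [mul_pos ha hx, mul_pos_of_neg_of_neg hb (neg_neg_of_pos hx)]

theorem isNonnegInEveryDirection_compression_sup [(S ⊔ T).HasOrthogonalProjection]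
    (ha : 0 ≤ a) (hb : b ≤ 0) (hSk : k ≤ finrank ℂ S) (hTk : k ≤ finrank ℂ T)
    (hS : ∀ x ∈ S, ⟪x, A x⟫_ℂ = ((a * ‖x‖ ^ 2 : ℝ) : ℂ))
    (hT : ∀ x ∈ T, ⟪x, A x⟫_ℂ = ((b * ‖x‖ ^ 2 : ℝ) : ℂ)) :
    IsNonnegInEveryDirection k (compression A (S ⊔ T)) := by
  intro c
  rw [← compression_smul]
  rcases le_total 0 c.re with hc | hc
  · refine hasNonnegSubspace_compression hSk le_sup_left fun x hx => ?_
    rw [_root_.smul_apply, inner_smul_right, hS x hx, Complex.re_mul_ofReal]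
    positivity
  · refine hasNonnegSubspace_compression hTk le_sup_right fun x hx => ?_
    rw [_root_.smul_apply, inner_smul_right, hT x hx, Complex.re_mul_ofReal]
    exact mul_nonneg_of_nonpos_of_nonpos hc (mul_nonpos_of_nonpos_of_nonneg hb (sq_nonneg _))

/-- The theorem of Li and Sze on higher-rank numerical ranges, in quadratic-form language. When both
deformations `A - a` and `-A - b` move away from `A`, the resulting subspaces span a
`2 * (k + 1)`-dimensional space whose compression has a deflating vector. -/
theorem IsNonnegInEveryDirection.hasIsotropicSubspace.{u} {k : ℕ} {E : Type u}
    [NormedAddCommGroup E] [InnerProductSpace ℂ E] [FiniteDimensional ℂ E] {A : E →L[ℂ] E}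
    (h : IsNonnegInEveryDirection k A) : HasIsotropicSubspace k A := by
  induction k generalizing E with
  | zero => exact ⟨⊥, by simp, by simp⟩
  | succ k ih =>
    have : CompleteSpace E := FiniteDimensional.complete ℂ E
    obtain ⟨a, ha, S, hSk, hS⟩ := h.exists_inner_eq_mul_norm_sq fun _ _ => ih
    obtain ⟨b, hb, T, hTk, hT⟩ := (h.smul (-1)).exists_inner_eq_mul_norm_sq fun _ _ => ih
    replace hT : ∀ x ∈ T, ⟪x, A x⟫_ℂ = ((-b * ‖x‖ ^ 2 : ℝ) : ℂ) := fun x hx => by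
      rw [neg_mul, Complex.ofReal_neg, ← hT x hx]
      simp
    rcases ha.eq_or_lt with rfl | ha_pos
    · exact ⟨S, hSk, fun x hx => by simpa using hS x hx⟩
    rcases hb.eq_or_lt with rfl | hb_pos
    · exact ⟨T, hTk, fun x hx => by simpa using hT x hx⟩
    have hdisj := disjoint_of_inner_apply_self_eq_mul_norm_sq ha_pos (neg_neg_of_pos hb_pos) hS hT
    have hdim : finrank ℂ (S ⊔ T : Submodule ℂ E) = 2 * (k + 1) := by
      have h := Submodule.finrank_sup_add_finrank_inf_eq S T
      rw [hdisj.eq_bot, finrank_bot] at h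
      omega
    have hcomp := isNonnegInEveryDirection_compression_sup ha (neg_nonpos.2 hb) hSk.ge hTk.ge hS hT
    obtain ⟨x, hx⟩ := hcomp.exists_isDeflatingVector hdim k.succ_pos
    obtain ⟨R, -, hRk, hR⟩ := (HasIsotropicSubspace.of_compression_deflation hx
      (ih (hcomp.compression_deflation hx))).exists_le_of_compression
    exact ⟨R, hRk, hR⟩

end LiSze

section ZeroDilationIndex

theorem inner_eq_zero_of_forall_inner_apply_self_eq_zero {E : Type*} [NormedAddCommGroup E]
    [InnerProductSpace ℂ E] {A : E →L[ℂ] E} {S : Submodule ℂ E} (h : ∀ x ∈ S, ⟪x, A x⟫_ℂ = 0)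
    {x y : E} (hx : x ∈ S) (hy : y ∈ S) : ⟪x, A y⟫_ℂ = 0 := by
  have h' : ∀ x ∈ S, ⟪A x, x⟫_ℂ = 0 := fun x hx => inner_eq_zero_symm.1 (h x hx)
  have hyI : Complex.I • x ∈ S := S.smul_mem _ hx
  rw [inner_eq_zero_symm]
  refine (inner_map_polarization' (A : E →ₗ[ℂ] E) y x).trans ?_
  simp only [ContinuousLinearMap.coe_coe, h' _ (S.add_mem hy hx), h' _ (S.sub_mem hy hx),
    h' _ (S.add_mem hy hyI), h' _ (S.sub_mem hy hyI)]
  simp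

variable {m : Type*} [Fintype m] {A : Matrix m m ℂ}

theorem bddAbove_setOf_isometric_zero_compression (A : Matrix m m ℂ) :
    BddAbove {k : ℕ | ∃ V : Matrix m (Fin k) ℂ, Vᴴ * V = 1 ∧ Vᴴ * A * V = 0} := by
  refine ⟨Fintype.card m, ?_⟩
  rintro k ⟨V, hV, -⟩
  calc k = (Vᴴ * V).rank := by rw [hV, Matrix.rank_one, Fintype.card_fin]
    _ ≤ V.rank := Matrix.rank_mul_le_right _ _
    _ ≤ Fintype.card m := V.rank_le_card_height

theorem exists_isometric_zero_compression_zdi (A : Matrix m m ℂ) :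
    ∃ V : Matrix m (Fin (zdi A)) ℂ, Vᴴ * V = 1 ∧ Vᴴ * A * V = 0 :=
  Nat.sSup_mem (s := {k | ∃ V : Matrix m (Fin k) ℂ, Vᴴ * V = 1 ∧ Vᴴ * A * V = 0})
    ⟨0, 0, Subsingleton.elim _ _, Subsingleton.elim _ _⟩
    (bddAbove_setOf_isometric_zero_compression A)

theorem card_le_zdi {ι : Type*} [Fintype ι] [DecidableEq ι] {V : Matrix m ι ℂ}
    (hV : Vᴴ * V = 1) (hVA : Vᴴ * A * V = 0) : Fintype.card ι ≤ zdi A := by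
  let e := (Fintype.equivFin ι).symm
  refine le_csSup (bddAbove_setOf_isometric_zero_compression A) ⟨V.submatrix id e, ?_, ?_⟩
  · rw [conjTranspose_submatrix, ← submatrix_mul _ _ _ _ _ Function.bijective_id, hV,
      submatrix_one_equiv]
  · rw [conjTranspose_submatrix, ← submatrix_id_id A,
      ← submatrix_mul _ _ _ _ _ Function.bijective_id,
      ← submatrix_mul _ _ _ _ _ Function.bijective_id, hVA, submatrix_zero, Pi.zero_apply,
      Pi.zero_apply]

theorem zdi_le_zdi_submatrix {n : Type*} [Fintype n] (A : Matrix m m ℂ) (e : n ≃ m) :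
    zdi A ≤ zdi (A.submatrix e e) := by
  obtain ⟨V, hV, hVA⟩ := exists_isometric_zero_compression_zdi A
  have h := card_le_zdi (A := A.submatrix e e) (V := V.submatrix e id)
    (by simp [conjTranspose_submatrix, submatrix_mul_equiv, hV])
    (by simp [conjTranspose_submatrix, submatrix_mul_equiv, hVA])
  rwa [Fintype.card_fin] at h

theorem zdi_submatrix_equiv {n : Type*} [Fintype n] (A : Matrix m m ℂ) (e : n ≃ m) :
    zdi (A.submatrix e e) = zdi A :=
  le_antisymm (by simpa using zdi_le_zdi_submatrix (A.submatrix e e) e.symm)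
    (zdi_le_zdi_submatrix A e)

variable [DecidableEq m]

theorem inner_toEuclideanCLM_eq_star_dotProduct (A : Matrix m m ℂ) (x y : EuclideanSpace ℂ m) :
    ⟪x, toEuclideanCLM (𝕜 := ℂ) A y⟫_ℂ = star x.ofLp ⬝ᵥ A *ᵥ y.ofLp := by
  rw [EuclideanSpace.inner_eq_star_dotProduct, ofLp_toEuclideanCLM, dotProduct_comm]

theorem hasIsotropicSubspace_zdi (A : Matrix m m ℂ) :
    HasIsotropicSubspace (zdi A) (toEuclideanCLM (𝕜 := ℂ) A) := by
  obtain ⟨V, hV, hVA⟩ := exists_isometric_zero_compression_zdi A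
  have hinj : Function.Injective (toEuclideanLin V) := by
    refine Function.LeftInverse.injective (g := toEuclideanLin Vᴴ) fun y => PiLp.ext fun i => ?_
    change (Vᴴ *ᵥ V *ᵥ y.ofLp) i = y.ofLp i
    rw [mulVec_mulVec, hV, one_mulVec]
  refine ⟨(toEuclideanLin V).range, by simp [LinearMap.finrank_range_of_inj hinj], ?_⟩
  rintro _ ⟨y, rfl⟩
  have h : star (V *ᵥ y.ofLp) ⬝ᵥ A *ᵥ V *ᵥ y.ofLp = 0 := by
    rw [star_mulVec, ← dotProduct_mulVec, mulVec_mulVec, mulVec_mulVec, hVA, zero_mulVec,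
      dotProduct_zero]
  rw [inner_toEuclideanCLM_eq_star_dotProduct]
  exact h

theorem HasIsotropicSubspace.le_zdi {k : ℕ}
    (h : HasIsotropicSubspace k (toEuclideanCLM (𝕜 := ℂ) A)) : k ≤ zdi A := by
  obtain ⟨S, hSk, hS⟩ := h
  let b := stdOrthonormalBasis ℂ S
  let V : Matrix m (Fin (finrank ℂ S)) ℂ := Matrix.of fun i j => (b j : EuclideanSpace ℂ m) i
  have hV : Vᴴ * V = 1 := by
    ext i j
    have hij := orthonormal_iff_ite.1 b.orthonormal i j
    rw [Submodule.coe_inner, EuclideanSpace.inner_eq_star_dotProduct, dotProduct_comm] at hij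
    rw [Matrix.one_apply, ← hij]
    rfl
  have hVA : Vᴴ * A * V = 0 := by
    ext i j
    have hij := inner_eq_zero_of_forall_inner_apply_self_eq_zero hS (b i).2 (b j).2
    rw [inner_toEuclideanCLM_eq_star_dotProduct] at hij
    rw [Matrix.mul_assoc, Matrix.zero_apply, ← hij]
    rfl
  simpa [hSk] using card_le_zdi hV hVA

end ZeroDilationIndex

section NonnegativeIndex

variable {m : Type*}

theorem isHermitian_matRe (A : Matrix m m ℂ) : (matRe A).IsHermitian :=
  (isHermitian_add_transpose_self A).smul (by simp [IsSelfAdjoint])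

variable [Fintype m] [DecidableEq m] {k : ℕ} {A M : Matrix m m ℂ}

theorem re_inner_toEuclideanCLM_matRe (A : Matrix m m ℂ) (x : EuclideanSpace ℂ m) :
    (⟪x, toEuclideanCLM (𝕜 := ℂ) (matRe A) x⟫_ℂ).re =
      (⟪x, toEuclideanCLM (𝕜 := ℂ) A x⟫_ℂ).re := by
  rw [matRe, ← star_eq_conjTranspose, map_smul, map_add, map_star, star_eq_adjoint,
    _root_.smul_apply, inner_smul_right, show (2⁻¹ : ℂ) = ((2⁻¹ : ℝ) : ℂ) by norm_num,
    Complex.re_ofReal_mul, re_inner_add_adjoint_apply_self]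
  ring

theorem hasNonnegSubspace_toEuclideanCLM_iff (hM : M.IsHermitian) :
    HasNonnegSubspace k (toEuclideanCLM (𝕜 := ℂ) M) ↔ k ≤ iNonneg M := by
  let T : EuclideanSpace ℂ m →ₗ[ℂ] EuclideanSpace ℂ m := (toEuclideanCLM (𝕜 := ℂ) M)
  let b := hM.eigenvectorBasis
  let μ := hM.eigenvalues
  let nonneg : Finset m := {i | 0 ≤ μ i}
  have hcard : iNonneg M = nonneg.card := dif_pos hM
  have hb : ∀ i, T (b i) = (μ i : ℂ) • b i := fun i =>
    PiLp.ext fun j => (congrFun (hM.mulVec_eigenvectorBasis i) j).trans (by simp [b, μ])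
  have hb_neg : ∀ i, (-T) (b i) = ((-μ i : ℝ) : ℂ) • b i := fun i => by simp [hb]
  have hnonneg : ∀ i ∈ (nonneg : Set m), 0 ≤ μ i := fun i hi => by simpa [nonneg] using hi
  have hneg : ∀ i ∈ ((nonnegᶜ : Finset m) : Set m), 0 < -μ i := fun i hi => by
    simpa [nonneg] using hi
  constructor
  · rintro ⟨S, hSk, hS⟩
    by_contra hk
    have hN := finrank_span_image_orthonormalBasis b nonnegᶜ
    rw [Finset.card_compl] at hN
    obtain ⟨x, hx0, hxS, hxN⟩ := exists_ne_zero_mem_mem_of_finrank_lt (S := S)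
      (T := Submodule.span ℂ (b '' (nonnegᶜ : Finset m))) (by
        have := nonneg.card_le_univ
        rw [hN, finrank_euclideanSpace]
        omega)
    have hpos := re_inner_apply_self_pos_of_mem_span hb_neg hneg hxN hx0
    rw [LinearMap.neg_apply, inner_neg_right, map_neg] at hpos
    exact (neg_pos.1 hpos).not_ge (hS x hxS)
  · intro hk
    refine ⟨Submodule.span ℂ (b '' nonneg), ?_, fun x hx =>
      re_inner_apply_self_nonneg_of_mem_span hb hnonneg hx⟩
    rwa [finrank_span_image_orthonormalBasis, ← hcard]

theorem hasNonnegSubspace_toEuclideanCLM_iff_le_iNonneg_matRe :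
    HasNonnegSubspace k (toEuclideanCLM (𝕜 := ℂ) A) ↔ k ≤ iNonneg (matRe A) := by
  rw [← hasNonnegSubspace_toEuclideanCLM_iff (isHermitian_matRe A)]
  simp only [HasNonnegSubspace, re_inner_toEuclideanCLM_matRe]

theorem zdi_le_iNonneg_matRe_smul (A : Matrix m m ℂ) (c : ℂ) :
    zdi A ≤ iNonneg (matRe (c • A)) := by
  obtain ⟨S, hS, hSA⟩ := hasIsotropicSubspace_zdi A
  refine hasNonnegSubspace_toEuclideanCLM_iff_le_iNonneg_matRe.1 ⟨S, hS.ge, fun x hx => ?_⟩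
  rw [map_smul, _root_.smul_apply, inner_smul_right, hSA x hx, mul_zero, Complex.zero_re]

theorem exists_zdi_eq_iNonneg_matRe (A : Matrix m m ℂ) :
    ∃ θ : ℝ, zdi A = iNonneg (matRe (Complex.exp (-(θ : ℂ) * Complex.I) • A)) := by
  by_contra! hne
  have hA : IsNonnegInEveryDirection (zdi A + 1) (toEuclideanCLM (𝕜 := ℂ) A) := by
    refine isNonnegInEveryDirection_of_forall_norm_eq_one fun c hc => ?_
    obtain ⟨θ, rfl⟩ := (Complex.norm_eq_one_iff c).1 hc
    rw [← map_smul, hasNonnegSubspace_toEuclideanCLM_iff_le_iNonneg_matRe]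
    simpa using (zdi_le_iNonneg_matRe_smul A _).lt_of_ne (hne (-θ))
  exact (Nat.lt_succ_self _).not_ge hA.hasIsotropicSubspace.le_zdi

end NonnegativeIndex

section BlockDiagonal

open Finset

theorem toSquareBlock_blockDiagonal'_fst {ι R : Type*} [Zero R] [DecidableEq ι] {n : ι → Type*}
    (M : ∀ j, Matrix (n j) (n j) R) (j : ι) :
    (blockDiagonal' M).toSquareBlock Sigma.fst j =
      reindex (Equiv.sigmaSubtype j).symm (Equiv.sigmaSubtype j).symm (M j) := by
  ext ⟨⟨i, a⟩, hi⟩ ⟨⟨i', b⟩, hi'⟩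
  obtain rfl : i = j := hi
  obtain rfl : i' = i := hi'
  exact blockDiagonal'_apply_eq M i' a b

theorem charpoly_blockDiagonal' {ι R : Type*} [CommRing R] [Fintype ι] [DecidableEq ι]
    {n : ι → Type*} [∀ j, Fintype (n j)] [∀ j, DecidableEq (n j)] (M : ∀ j, Matrix (n j) (n j) R) :
    (blockDiagonal' M).charpoly = ∏ j, (M j).charpoly := by
  let _ : LinearOrder ι := LinearOrder.lift' (Fintype.equivFin ι) (Fintype.equivFin ι).injective
  rw [Matrix.charpoly, (blockTriangular_blockDiagonal' M).charmatrix.det_fintype]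
  refine prod_congr rfl fun j _ => ?_
  rw [← charmatrix_toSquareBlock, toSquareBlock_blockDiagonal'_fst, ← Matrix.charpoly,
    charpoly_reindex]

theorem matRe_blockDiagonal' {ι : Type*} [DecidableEq ι] {n : ι → Type*}
    (A : ∀ j, Matrix (n j) (n j) ℂ) :
    matRe (blockDiagonal' A) = blockDiagonal' fun j => matRe (A j) := by
  rw [matRe, blockDiagonal'_conjTranspose, ← blockDiagonal'_add, ← blockDiagonal'_smul]
  rfl

theorem matRe_fromBlocks_zero {m n : Type*} (A : Matrix m m ℂ) (D : Matrix n n ℂ) :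
    matRe (fromBlocks A 0 0 D) = fromBlocks (matRe A) 0 0 (matRe D) := by
  simp [matRe, fromBlocks_conjTranspose, fromBlocks_add, fromBlocks_smul]

theorem iNonneg_eq_countP_roots_charpoly {m : Type*} [Fintype m] [DecidableEq m]
    {M : Matrix m m ℂ} (hM : M.IsHermitian) :
    iNonneg M = M.charpoly.roots.countP (0 ≤ ·.re) := by
  rw [iNonneg, dif_pos hM, hM.roots_charpoly_eq_eigenvalues, Multiset.countP_map]
  simp [Finset.card, Finset.filter]

theorem iNonneg_zero (n : Type*) [Fintype n] [DecidableEq n] :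
    iNonneg (0 : Matrix n n ℂ) = Fintype.card n := by
  rw [iNonneg_eq_countP_roots_charpoly isHermitian_zero, charpoly_zero, roots_X_pow,
    Multiset.nsmul_singleton, Multiset.countP_eq_card.2, Multiset.card_replicate]
  intro z hz
  rw [Multiset.eq_of_mem_replicate hz, Complex.zero_re]

theorem iNonneg_blockDiagonal' {ι : Type*} [Fintype ι] [DecidableEq ι] {n : ι → Type*}
    [∀ j, Fintype (n j)] [∀ j, DecidableEq (n j)] {M : ∀ j, Matrix (n j) (n j) ℂ}
    (hM : ∀ j, (M j).IsHermitian) : iNonneg (blockDiagonal' M) = ∑ j, iNonneg (M j) := by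
  have hne : ∏ j, (M j).charpoly ≠ 0 := prod_ne_zero_iff.2 fun j _ => (charpoly_monic _).ne_zero
  rw [iNonneg_eq_countP_roots_charpoly (isHermitian_blockDiagonal'_iff.2 hM),
    charpoly_blockDiagonal', roots_prod _ _ hne, ← Multiset.coe_countPAddMonoidHom,
    Multiset.bind, Multiset.join, map_multiset_sum, Multiset.map_map]
  exact sum_congr rfl fun j _ => (iNonneg_eq_countP_roots_charpoly (hM j)).symm

theorem iNonneg_fromBlocks_zero {m n : Type*} [Fintype m] [DecidableEq m] [Fintype n]
    [DecidableEq n] {M : Matrix m m ℂ} {N : Matrix n n ℂ} (hM : M.IsHermitian)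
    (hN : N.IsHermitian) : iNonneg (fromBlocks M 0 0 N) = iNonneg M + iNonneg N := by
  rw [iNonneg_eq_countP_roots_charpoly (hM.fromBlocks conjTranspose_zero hN),
    charpoly_fromBlocks_zero₁₂,
    roots_mul (mul_ne_zero (charpoly_monic M).ne_zero (charpoly_monic N).ne_zero),
    Multiset.countP_add, ← iNonneg_eq_countP_roots_charpoly hM,
    ← iNonneg_eq_countP_roots_charpoly hN]

theorem sum_zdi_le_zdi_blockDiagonal' {ι : Type*} [Fintype ι] [DecidableEq ι] {n : ι → Type*}
    [∀ j, Fintype (n j)] (A : ∀ j, Matrix (n j) (n j) ℂ) :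
    ∑ j, zdi (A j) ≤ zdi (blockDiagonal' A) := by
  choose V hV hVA using fun j => exists_isometric_zero_compression_zdi (A j)
  have h := card_le_zdi (A := blockDiagonal' A) (V := blockDiagonal' V)
    (by simp only [blockDiagonal'_conjTranspose, ← blockDiagonal'_mul, hV]
        exact blockDiagonal'_one)
    (by simp only [blockDiagonal'_conjTranspose, ← blockDiagonal'_mul, hVA]
        exact blockDiagonal'_zero)
  simpa using h

theorem zdi_blockDiagonal'_eq_sum_iff {ι : Type*} [Fintype ι] [DecidableEq ι] {n : ι → Type*}
    [∀ j, Fintype (n j)] [∀ j, DecidableEq (n j)] (A : ∀ j, Matrix (n j) (n j) ℂ) :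
    zdi (blockDiagonal' A) = ∑ j, zdi (A j) ↔
      ∃ θ : ℝ, ∀ j, zdi (A j) = iNonneg (matRe (Complex.exp (-(θ : ℂ) * Complex.I) • A j)) := by
  have hsum (c : ℂ) :
      iNonneg (matRe (c • blockDiagonal' A)) = ∑ j, iNonneg (matRe (c • A j)) := by
    rw [← blockDiagonal'_smul, matRe_blockDiagonal',
      iNonneg_blockDiagonal' fun j => isHermitian_matRe _]
    rfl
  constructor
  · intro h
    obtain ⟨θ, hθ⟩ := exists_zdi_eq_iNonneg_matRe (blockDiagonal' A)
    rw [h, hsum, sum_eq_sum_iff_of_le fun j _ => zdi_le_iNonneg_matRe_smul _ _] at hθ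
    exact ⟨θ, fun j => hθ j (mem_univ j)⟩
  · rintro ⟨θ, hθ⟩
    refine le_antisymm ?_ (sum_zdi_le_zdi_blockDiagonal' A)
    calc zdi (blockDiagonal' A)
      _ ≤ iNonneg (matRe (Complex.exp (-(θ : ℂ) * Complex.I) • blockDiagonal' A)) :=
        zdi_le_iNonneg_matRe_smul _ _
      _ = ∑ j, zdi (A j) := (hsum _).trans (sum_congr rfl fun j _ => (hθ j).symm)

theorem zdi_blockDiagonal_const (ι : Type*) [Fintype ι] [DecidableEq ι] {m : Type*} [Fintype m]
    (A : Matrix m m ℂ) : zdi (blockDiagonal fun _ : ι => A) = Fintype.card ι * zdi A := by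
  classical
  obtain ⟨θ, hθ⟩ := exists_zdi_eq_iNonneg_matRe A
  have hswap : (Prod.toSigma ∘ Prod.swap : m × ι → Σ _, m) =
    (Equiv.prodComm m ι).trans (Equiv.sigmaEquivProd ι m).symm := rfl
  rw [← blockDiagonal'_submatrix_eq_blockDiagonal, hswap, zdi_submatrix_equiv,
    (zdi_blockDiagonal'_eq_sum_iff _).2 ⟨θ, fun _ => hθ⟩, sum_const, card_univ, smul_eq_mul]

theorem zdi_fromBlocks_zero {m : Type*} [Fintype m] (A : Matrix m m ℂ) (n : Type*) [Fintype n] :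
    zdi (fromBlocks A 0 0 (0 : Matrix n n ℂ)) = zdi A + Fintype.card n := by
  classical
  refine le_antisymm ?_ ?_
  · obtain ⟨θ, hθ⟩ := exists_zdi_eq_iNonneg_matRe A
    have h := zdi_le_iNonneg_matRe_smul (fromBlocks A 0 0 (0 : Matrix n n ℂ))
      (Complex.exp (-(θ : ℂ) * Complex.I))
    rw [fromBlocks_smul, smul_zero, smul_zero, smul_zero, matRe_fromBlocks_zero,
      iNonneg_fromBlocks_zero (isHermitian_matRe _) (isHermitian_matRe _), ← hθ] at h
    simpa [matRe, iNonneg_zero] using h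
  · obtain ⟨V, hV, hVA⟩ := exists_isometric_zero_compression_zdi A
    have h := card_le_zdi (A := fromBlocks A 0 0 (0 : Matrix n n ℂ))
      (V := fromBlocks V 0 0 (1 : Matrix n n ℂ))
      (by simp [fromBlocks_conjTranspose, fromBlocks_multiply, hV])
      (by simp [fromBlocks_conjTranspose, fromBlocks_multiply, hVA])
    simpa using h

end BlockDiagonal

/-- Corollary 2.8. -/
theorem zdi_blockDiagonal' {m : ℕ} (nsz : Fin m → ℕ)
    (Aj : ∀ j : Fin m, Matrix (Fin (nsz j)) (Fin (nsz j)) ℂ) :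
    (∑ j, zdi (Aj j)) ≤ zdi (Matrix.blockDiagonal' Aj) ∧
    (zdi (Matrix.blockDiagonal' Aj) = ∑ j, zdi (Aj j) ↔
      ∃ θ₀ : ℝ, ∀ j, zdi (Aj j) =
        iNonneg (matRe (Complex.exp (-(θ₀ : ℂ) * Complex.I) • Aj j))) ∧
    (∀ (k l : ℕ) (A₁ : Matrix (Fin k) (Fin k) ℂ),
      zdi (Matrix.blockDiagonal fun _ : Fin l => A₁) = l * zdi A₁) ∧
    (∀ (k l : ℕ) (A₁ : Matrix (Fin k) (Fin k) ℂ),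
      zdi (Matrix.fromBlocks A₁ 0 0 (0 : Matrix (Fin l) (Fin l) ℂ)) = zdi A₁ + l) := by
  refine ⟨sum_zdi_le_zdi_blockDiagonal' Aj, zdi_blockDiagonal'_eq_sum_iff Aj, ?_, ?_⟩
  · intro k l A₁
    rw [zdi_blockDiagonal_const, Fintype.card_fin]
  · intro k l A₁
    rw [zdi_fromBlocks_zero, Fintype.card_fin]
end

section
/- If A is an n-by-n complex matrix with d(A) > ⌊2n/3⌋, then 0 is a reducing eigenvalue of A with multiplicity at least 3d(A) − 2n, i.e., dim(ker A ∩ ker A*) ≥ 3d(A) − 2n, and A is unitarily similar to a block-diagonal matrix B ⊕ 0_{3d(A)−2n}, where B is of size 3(n − d(A)) and d(B) = 2(n − d(A)). Moreover, the bound ⌊2n/3⌋ is sharp: for every n ≥ 1 there exists an n-by-n matrix A with d(A) = ⌊2n/3⌋ such that ker A ∩ ker A* = {0}. -/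
open Matrix Polynomial

/-!
Let `A` be of size `n`. Zero dilation can be tested on ranks: if `Vᴴ * A * V = 0` then
`V.rank ≤ zdi A`, with equality attained by an isometry. For such `V`, of rank `d`, `A * V` and
`Aᴴ * V` both map into the orthogonal complement of the range of `V`, so each has rank at most
`n - d`. Their kernels therefore meet in dimension at least `d - 2 * (n - d) = 3 * d - 2 * n`, and
`V` carries this intersection into `ker A ⊓ ker Aᴴ`. Splitting off a reducing zero block of size `l`
lowers the index by exactly `l`, which determines the index of the complementary block.
-/

namespace ZeroDilation

section LeftInverse

variable {R m p l ι : Type*} [CommSemiring R] [Fintype m]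

lemma mul_eq_zero_of_forall_col_mem_ker {N : Matrix p m R} {Q : Matrix m l R}
    (h : ∀ j, Q.col j ∈ LinearMap.ker N.mulVecLin) : N * Q = 0 := by
  ext i j
  exact congrFun (h j) i

variable [Fintype ι] [DecidableEq ι] {L : Matrix ι m R} {V : Matrix m ι R}

lemma mulVec_injective_of_mul_eq_one (h : L * V = 1) : Function.Injective V.mulVec :=
  Function.LeftInverse.injective (g := L.mulVec) fun x => by
    rw [Matrix.mulVec_mulVec, h, Matrix.one_mulVec]

variable [StrongRankCondition R]

lemma rank_left_eq_card_of_mul_eq_one (h : L * V = 1) : L.rank = Fintype.card ι :=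
  L.rank_le_card_height.antisymm <| by
    simpa only [h, Matrix.rank_one] using Matrix.rank_mul_le_left L V

lemma rank_right_eq_card_of_mul_eq_one (h : L * V = 1) : V.rank = Fintype.card ι :=
  V.rank_le_card_width.antisymm <| by
    simpa only [h, Matrix.rank_one] using Matrix.rank_mul_le_right L V

lemma card_le_card_of_mul_eq_one (h : L * V = 1) : Fintype.card ι ≤ Fintype.card m :=
  (rank_right_eq_card_of_mul_eq_one h).symm.trans_le V.rank_le_card_height

end LeftInverse

section RankNullity

variable {K m p l : Type*} [Field K] [Fintype m]

lemma finrank_ker_add_rank (M : Matrix p m K) :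
    Module.finrank K (LinearMap.ker M.mulVecLin) + M.rank = Fintype.card m := by
  rw [add_comm, Matrix.rank, LinearMap.finrank_range_add_finrank_ker,
    Module.finrank_fintype_fun_eq_card]

lemma card_le_rank_add_rank_add_finrank_ker_inf_ker (M : Matrix p m K) (N : Matrix l m K) :
    Fintype.card m ≤ M.rank + N.rank +
      Module.finrank K ↥(LinearMap.ker M.mulVecLin ⊓ LinearMap.ker N.mulVecLin) := by
  have hM := finrank_ker_add_rank M
  have hN := finrank_ker_add_rank N
  have hinf := Submodule.finrank_sup_add_finrank_inf_eq
    (LinearMap.ker M.mulVecLin) (LinearMap.ker N.mulVecLin)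
  have hsup := Submodule.finrank_le (LinearMap.ker M.mulVecLin ⊔ LinearMap.ker N.mulVecLin)
  rw [Module.finrank_fintype_fun_eq_card] at hsup
  omega

end RankNullity

section Isometry

variable {𝕜 m l ι : Type*} [RCLike 𝕜] [Fintype m] [Fintype l] [DecidableEq l]

lemma exists_isometry_forall_col_mem (K : Submodule 𝕜 (m → 𝕜))
    (hl : Fintype.card l ≤ Module.finrank 𝕜 K) :
    ∃ Q : Matrix m l 𝕜, Qᴴ * Q = 1 ∧ ∀ j, Q.col j ∈ K := by
  let ofLp := WithLp.linearEquiv 2 𝕜 (m → 𝕜)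
  let K' : Submodule 𝕜 (EuclideanSpace 𝕜 m) := K.map ofLp.symm.toLinearMap
  have hK' : Module.finrank 𝕜 K' = Module.finrank 𝕜 K := ofLp.symm.finrank_map_eq K
  obtain ⟨f⟩ : Nonempty (l ↪ Fin (Module.finrank 𝕜 K')) :=
    Function.Embedding.nonempty_of_card_le (by rwa [Fintype.card_fin, hK'])
  let q : l → EuclideanSpace 𝕜 m := fun j => stdOrthonormalBasis 𝕜 K' (f j)
  have hq : Orthonormal 𝕜 q :=
    ((stdOrthonormalBasis 𝕜 K').orthonormal.comp_linearIsometry K'.subtypeₗᵢ).comp f f.injective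
  refine ⟨Matrix.of fun i j => q j i, ?_, fun j => ?_⟩
  · rw [← Matrix.gram_eq_one_iff_orthonormal.mpr hq,
      Matrix.gram_eq_conjTranspose_mul (EuclideanSpace.basisFun m 𝕜)]
    rfl
  · obtain ⟨x, hx, hxq⟩ := (stdOrthonormalBasis 𝕜 K' (f j)).2
    have hcol : (Matrix.of fun i j => q j i).col j = x := congrArg ofLp hxq.symm
    rwa [hcol]

lemma exists_mul_isometry [Fintype ι] (V : Matrix m ι 𝕜) :
    ∃ C : Matrix ι (Fin V.rank) 𝕜, (V * C)ᴴ * (V * C) = 1 := by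
  obtain ⟨Q, hQ, hmem⟩ := exists_isometry_forall_col_mem (l := Fin V.rank)
    (LinearMap.range V.mulVecLin) (Fintype.card_fin _).le
  choose c hc using hmem
  have hVC : V * (Matrix.of c)ᵀ = Q := by
    ext i j
    exact congrFun (hc j) i
  exact ⟨(Matrix.of c)ᵀ, by rw [hVC, hQ]⟩

lemma exists_isometry_conjTranspose_mul_eq_zero {p : Type*} [Fintype p]
    [DecidableEq p] (hcard : Fintype.card m = Fintype.card p + Fintype.card l)
    {Q : Matrix m l 𝕜} (hQ : Qᴴ * Q = 1) :
    ∃ P : Matrix m p 𝕜, Pᴴ * P = 1 ∧ Qᴴ * P = 0 := by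
  have hker : Fintype.card p ≤ Module.finrank 𝕜 (LinearMap.ker Qᴴ.mulVecLin) := by
    have := finrank_ker_add_rank Qᴴ
    rw [rank_left_eq_card_of_mul_eq_one hQ] at this
    omega
  obtain ⟨P, hP, hmem⟩ := exists_isometry_forall_col_mem _ hker
  exact ⟨P, hP, mul_eq_zero_of_forall_col_mem_ker hmem⟩

end Isometry

section ReducingKernel

variable {m : Type*} [Fintype m]

/-- The joint kernel of `A` and `Aᴴ`, i.e. the eigenspace of `0` as a reducing eigenvalue. -/
def reducingKer (A : Matrix m m ℂ) : Submodule ℂ (m → ℂ) :=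
  LinearMap.ker A.mulVecLin ⊓ LinearMap.ker Aᴴ.mulVecLin

lemma reducingKer_eq_bot_of_forall_row_or_col [DecidableEq m] {A : Matrix m m ℂ}
    (h : ∀ i, ∃ k, A.row k = Pi.single i 1 ∨ A.col k = Pi.single i 1) : reducingKer A = ⊥ := by
  refine (Submodule.eq_bot_iff _).mpr fun x ⟨hx, hx'⟩ => funext fun i => ?_
  obtain ⟨k, hrow | hcol⟩ := h i
  · have : A.row k ⬝ᵥ x = 0 := congrFun hx k
    simpa [hrow] using this
  · have : star (A.col k) ⬝ᵥ x = 0 := congrFun hx' k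
    simpa [hcol, Pi.star_single] using this

end ReducingKernel

section Index

variable {m p l ι : Type*} [Fintype m] [Fintype p] [Fintype l] [Fintype ι]

lemma bddAbove_setOf_zero_dilation (A : Matrix m m ℂ) :
    BddAbove {k : ℕ | ∃ V : Matrix m (Fin k) ℂ, Vᴴ * V = 1 ∧ Vᴴ * A * V = 0} := by
  refine ⟨Fintype.card m, ?_⟩
  rintro k ⟨V, hV, -⟩
  simpa only [Fintype.card_fin] using card_le_card_of_mul_eq_one hV

lemma exists_isometry_zdi (A : Matrix m m ℂ) :
    ∃ V : Matrix m (Fin (zdi A)) ℂ, Vᴴ * V = 1 ∧ Vᴴ * A * V = 0 :=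
  Nat.sSup_mem (s := {k : ℕ | ∃ V : Matrix m (Fin k) ℂ, Vᴴ * V = 1 ∧ Vᴴ * A * V = 0})
    ⟨0, 0, Subsingleton.elim _ _, Subsingleton.elim _ _⟩ (bddAbove_setOf_zero_dilation A)

lemma rank_le_zdi {A : Matrix m m ℂ} {V : Matrix m ι ℂ} (h : Vᴴ * A * V = 0) :
    V.rank ≤ zdi A := by
  obtain ⟨C, hC⟩ := exists_mul_isometry V
  refine le_csSup (bddAbove_setOf_zero_dilation A) ⟨V * C, hC, ?_⟩
  calc (V * C)ᴴ * A * (V * C) = Cᴴ * (Vᴴ * A * V) * C := by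
        simp only [Matrix.conjTranspose_mul, Matrix.mul_assoc]
    _ = 0 := by rw [h, Matrix.mul_zero, Matrix.zero_mul]

lemma card_le_zdi [DecidableEq ι] {A : Matrix m m ℂ} {V : Matrix m ι ℂ} (hV : Vᴴ * V = 1)
    (h : Vᴴ * A * V = 0) : Fintype.card ι ≤ zdi A :=
  (rank_right_eq_card_of_mul_eq_one hV).symm.trans_le (rank_le_zdi h)

lemma card_le_zdi_of_submatrix_eq_zero {A : Matrix m m ℂ}
    (f : ι ↪ m) (h : A.submatrix f f = 0) : Fintype.card ι ≤ zdi A := by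
  classical
  refine card_le_zdi (V := (1 : Matrix m m ℂ).submatrix id f) ?_ ?_
  · rw [Matrix.conjTranspose_submatrix, Matrix.conjTranspose_one,
      ← Matrix.submatrix_mul _ _ _ _ _ Function.bijective_id, Matrix.one_mul,
      Matrix.submatrix_one_embedding]
  · rw [Matrix.conjTranspose_submatrix, Matrix.conjTranspose_one, ← Matrix.submatrix_id_id A,
      ← Matrix.submatrix_mul _ _ _ _ _ Function.bijective_id,
      ← Matrix.submatrix_mul _ _ _ _ _ Function.bijective_id, Matrix.one_mul, Matrix.mul_one, h]

lemma zdi_le_card (A : Matrix m m ℂ) : zdi A ≤ Fintype.card m := by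
  obtain ⟨V, hV, -⟩ := exists_isometry_zdi A
  simpa only [Fintype.card_fin] using card_le_card_of_mul_eq_one hV

lemma zdi_conjTranspose_mul_mul_le [DecidableEq ι] (A : Matrix m m ℂ) {W : Matrix m ι ℂ}
    (hW : Wᴴ * W = 1) : zdi (Wᴴ * A * W) ≤ zdi A := by
  obtain ⟨V, hV, hAV⟩ := exists_isometry_zdi (Wᴴ * A * W)
  rw [← Fintype.card_fin (zdi (Wᴴ * A * W))]
  refine card_le_zdi (V := W * V) ?_ ?_
  · calc (W * V)ᴴ * (W * V) = Vᴴ * (Wᴴ * W) * V := by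
          simp only [Matrix.conjTranspose_mul, Matrix.mul_assoc]
      _ = 1 := by rw [hW, Matrix.mul_one, hV]
  · rw [← hAV]
    simp only [Matrix.conjTranspose_mul, Matrix.mul_assoc]

theorem three_mul_zdi_le (A : Matrix m m ℂ) :
    3 * zdi A ≤ 2 * Fintype.card m + Module.finrank ℂ (reducingKer A) := by
  obtain ⟨V, hV, hAV⟩ := exists_isometry_zdi A
  have hrank {M : Matrix m (Fin (zdi A)) ℂ} (hM : Vᴴ * M = 0) :
      zdi A + M.rank ≤ Fintype.card m := by
    simpa only [rank_left_eq_card_of_mul_eq_one hV, Fintype.card_fin] using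
      Matrix.rank_add_rank_le_card_of_mul_eq_zero hM
  have hA : zdi A + (A * V).rank ≤ Fintype.card m := hrank (by rw [← Matrix.mul_assoc, hAV])
  have hAH : zdi A + (Aᴴ * V).rank ≤ Fintype.card m := hrank <| by
    simpa only [Matrix.conjTranspose_mul, Matrix.conjTranspose_conjTranspose,
      Matrix.conjTranspose_zero] using congrArg Matrix.conjTranspose hAV
  have hker := card_le_rank_add_rank_add_finrank_ker_inf_ker (A * V) (Aᴴ * V)
  rw [Fintype.card_fin, Matrix.mulVecLin_mul, Matrix.mulVecLin_mul, LinearMap.ker_comp,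
    LinearMap.ker_comp, ← Submodule.comap_inf] at hker
  have hcomap : Module.finrank ℂ ((reducingKer A).comap V.mulVecLin) ≤
      Module.finrank ℂ (reducingKer A) :=
    LinearMap.finrank_le_finrank_of_injective
      (f := V.mulVecLin.restrict (p := (reducingKer A).comap V.mulVecLin) fun _ hx => hx)
      fun _ _ h => Subtype.ext (mulVec_injective_of_mul_eq_one hV (congrArg Subtype.val h))
  rw [reducingKer] at hcomap ⊢
  omega

theorem zdi_fromBlocks_zero (B : Matrix p p ℂ) :
    zdi (Matrix.fromBlocks B 0 0 (0 : Matrix l l ℂ)) = zdi B + Fintype.card l := by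
  classical
  apply le_antisymm
  · obtain ⟨V, hV, hBV⟩ := exists_isometry_zdi
      (Matrix.fromBlocks B 0 0 (0 : Matrix l l ℂ))
    obtain ⟨X, Y, rfl⟩ : ∃ X Y, V = Matrix.fromRows X Y := ⟨_, _, (Matrix.fromRows_toRows V).symm⟩
    have hB : Xᴴ * B * X = 0 := by
      simpa [Matrix.conjTranspose_fromRows_eq_fromCols_conjTranspose,
        Matrix.fromCols_mul_fromBlocks, Matrix.fromCols_mul_fromRows] using hBV
    have hker : LinearMap.ker X.mulVecLin ⊓ LinearMap.ker Y.mulVecLin = ⊥ := by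
      refine (Submodule.eq_bot_iff _).mpr fun x ⟨hX, hY⟩ => mulVec_injective_of_mul_eq_one hV ?_
      rw [SetLike.mem_coe, LinearMap.mem_ker, Matrix.mulVecLin_apply] at hX hY
      rw [Matrix.fromRows_mulVec, hX, hY, Matrix.mulVec_zero, Sum.elim_zero_zero]
    have hcard := card_le_rank_add_rank_add_finrank_ker_inf_ker X Y
    rw [hker, finrank_bot, Fintype.card_fin, add_zero] at hcard
    exact hcard.trans (add_le_add (rank_le_zdi hB) Y.rank_le_card_height)
  · obtain ⟨V, hV, hBV⟩ := exists_isometry_zdi B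
    simpa using card_le_zdi (V := Matrix.fromBlocks V 0 0 (1 : Matrix l l ℂ))
      (A := Matrix.fromBlocks B 0 0 (0 : Matrix l l ℂ))
      (by simp [Matrix.fromBlocks_conjTranspose, Matrix.fromBlocks_multiply, hV])
      (by simp [Matrix.fromBlocks_conjTranspose, Matrix.fromBlocks_multiply, hBV])

end Index

section UnitarySimilarity

variable {m l p : Type*} [Fintype m] [DecidableEq m] [Fintype l] [DecidableEq l]
  [Fintype p] [DecidableEq p]

lemma unitSimG_iff_exists_conjTranspose_mul_mul_eq {A : Matrix m m ℂ} {B : Matrix l l ℂ} :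
    UnitSimG A B ↔ ∃ W : Matrix m l ℂ, Wᴴ * W = 1 ∧ W * Wᴴ = 1 ∧ Wᴴ * A * W = B := by
  constructor
  · rintro ⟨e, U, hU, hB⟩
    refine ⟨U.submatrix e id, ?_, ?_, ?_⟩
    · rw [Matrix.conjTranspose_submatrix, Matrix.submatrix_mul_equiv,
        ← Matrix.star_eq_conjTranspose, Matrix.mem_unitaryGroup_iff'.mp hU, Matrix.submatrix_id_id]
    · rw [Matrix.conjTranspose_submatrix, ← Matrix.submatrix_mul _ _ _ _ _ Function.bijective_id,
        ← Matrix.star_eq_conjTranspose, Matrix.mem_unitaryGroup_iff.mp hU,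
        Matrix.submatrix_one_equiv]
    · have hA : A = (Matrix.reindex e e A).submatrix e e := by simp
      rw [← hB, hA, Matrix.conjTranspose_submatrix, Matrix.submatrix_mul_equiv,
        Matrix.submatrix_mul_equiv, ← hA, Matrix.submatrix_id_id]
  · rintro ⟨W, hW, hW', hB⟩
    have hcard : Fintype.card m = Fintype.card l :=
      (rank_left_eq_card_of_mul_eq_one hW').symm.trans (rank_right_eq_card_of_mul_eq_one hW)
    let e : m ≃ l := Fintype.equivOfCardEq hcard
    refine ⟨e, W.submatrix e.symm id, ?_, ?_⟩
    · rw [Matrix.mem_unitaryGroup_iff', Matrix.star_eq_conjTranspose,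
        Matrix.conjTranspose_submatrix, Matrix.submatrix_mul_equiv, hW, Matrix.submatrix_id_id]
    · rw [Matrix.reindex_apply, Matrix.conjTranspose_submatrix, Matrix.submatrix_mul_equiv,
        Matrix.submatrix_mul_equiv, hB, Matrix.submatrix_id_id]

lemma zdi_eq_of_unitSimG {A : Matrix m m ℂ} {B : Matrix l l ℂ} (h : UnitSimG A B) :
    zdi A = zdi B := by
  obtain ⟨W, hW, hW', rfl⟩ := unitSimG_iff_exists_conjTranspose_mul_mul_eq.mp h
  refine le_antisymm ?_ (zdi_conjTranspose_mul_mul_le A hW)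
  have hA : Wᴴᴴ * (Wᴴ * A * W) * Wᴴ = A := by
    calc Wᴴᴴ * (Wᴴ * A * W) * Wᴴ = (W * Wᴴ) * A * (W * Wᴴ) := by
          simp only [Matrix.conjTranspose_conjTranspose, Matrix.mul_assoc]
      _ = A := by rw [hW', Matrix.one_mul, Matrix.mul_one]
  conv_lhs => rw [← hA]
  exact zdi_conjTranspose_mul_mul_le _ (by rwa [Matrix.conjTranspose_conjTranspose])

theorem exists_unitSimG_fromBlocks_zero (A : Matrix m m ℂ)
    (hcard : Fintype.card m = Fintype.card p + Fintype.card l)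
    (hl : Fintype.card l ≤ Module.finrank ℂ (reducingKer A)) :
    ∃ B : Matrix p p ℂ, UnitSimG A (Matrix.fromBlocks B 0 0 (0 : Matrix l l ℂ)) := by
  obtain ⟨Q, hQ, hmem⟩ := exists_isometry_forall_col_mem _ hl
  obtain ⟨P, hP, hQP⟩ := exists_isometry_conjTranspose_mul_eq_zero hcard hQ
  have hPQ : Pᴴ * Q = 0 := by simpa using congrArg Matrix.conjTranspose hQP
  have hAQ : A * Q = 0 := mul_eq_zero_of_forall_col_mem_ker fun j => (hmem j).1
  have hQA : Qᴴ * A = 0 := by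
    simpa using congrArg Matrix.conjTranspose
      (mul_eq_zero_of_forall_col_mem_ker fun j => (hmem j).2)
  have hW : (Matrix.fromCols P Q)ᴴ * Matrix.fromCols P Q = 1 := by
    rw [Matrix.conjTranspose_fromCols_eq_fromRows_conjTranspose, Matrix.fromRows_mul_fromCols,
      hP, hQ, hPQ, hQP, Matrix.fromBlocks_one]
  have hW' : Matrix.fromCols P Q * (Matrix.fromCols P Q)ᴴ = 1 :=
    (Matrix.mul_eq_one_comm_of_card_eq _ _ _ (by rw [Fintype.card_sum, hcard])).mp hW
  refine ⟨Pᴴ * A * P, unitSimG_iff_exists_conjTranspose_mul_mul_eq.mpr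
    ⟨Matrix.fromCols P Q, hW, hW', ?_⟩⟩
  rw [Matrix.conjTranspose_fromCols_eq_fromRows_conjTranspose, Matrix.fromRows_mul,
    Matrix.fromRows_mul_fromCols, Matrix.mul_assoc _ A Q, hAQ, hQA]
  simp only [Matrix.mul_zero, Matrix.zero_mul]

end UnitarySimilarity

section Sharpness

/-- The 0-1 matrix witnessing sharpness. With `s = 2 * m / 3`, its leading `s × s` block vanishes
and each standard basis vector `e i` is a row or a column: row `i + s` is `e i`, column `j < s` is
`e (j + s)`, and column `j` with `s ≤ j < 2 * s` is `e (2 * s - 1 - j)`. -/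
def sharpMatrix (m : ℕ) : Matrix (Fin m) (Fin m) ℂ :=
  Matrix.of fun i j =>
    if (i : ℕ) = j + 2 * m / 3 ∨ i < j ∧ (i + j + 1 : ℕ) = 2 * (2 * m / 3) then 1 else 0

lemma two_mul_div_three_le_zdi_sharpMatrix (m : ℕ) : 2 * m / 3 ≤ zdi (sharpMatrix m) := by
  rw [← Fintype.card_fin (2 * m / 3)]
  refine card_le_zdi_of_submatrix_eq_zero (Fin.castLEEmb (by omega)) ?_
  ext i j
  exact if_neg (by simp only [Fin.castLEEmb_apply, Fin.lt_def, Fin.val_castLE]; omega)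

lemma reducingKer_sharpMatrix (m : ℕ) : reducingKer (sharpMatrix m) = ⊥ := by
  refine reducingKer_eq_bot_of_forall_row_or_col fun i => ?_
  have hrow (k : Fin m) (hk : (k : ℕ) = i + 2 * m / 3) :
      (sharpMatrix m).row k = Pi.single i 1 := by
    ext j
    simp only [Matrix.row_apply, sharpMatrix, Matrix.of_apply, Pi.single_apply, Fin.ext_iff,
      Fin.lt_def]
    congr 1
    exact propext (by omega)
  have hcol (k : Fin m) (hk : (i : ℕ) = k + 2 * m / 3 ∧ (k : ℕ) < 2 * m / 3 ∨
      i < k ∧ (i + k + 1 : ℕ) = 2 * (2 * m / 3)) :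
      (sharpMatrix m).col k = Pi.single i 1 := by
    ext j
    simp only [Matrix.col_apply, sharpMatrix, Matrix.of_apply, Pi.single_apply, Fin.ext_iff,
      Fin.lt_def] at hk ⊢
    congr 1
    exact propext (by omega)
  by_cases hlow : (i : ℕ) + 2 * m / 3 < m
  · exact ⟨⟨i + 2 * m / 3, hlow⟩, Or.inl (hrow _ rfl)⟩
  by_cases hhigh : 2 * m / 3 ≤ (i : ℕ)
  · exact ⟨⟨i - 2 * m / 3, by omega⟩, Or.inr (hcol _ (by simp only [Fin.lt_def]; omega))⟩
  · exact ⟨⟨2 * (2 * m / 3) - 1 - i, by omega⟩,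
      Or.inr (hcol _ (by simp only [Fin.lt_def]; omega))⟩

lemma zdi_sharpMatrix (m : ℕ) : zdi (sharpMatrix m) = 2 * m / 3 := by
  refine le_antisymm ?_ (two_mul_div_three_le_zdi_sharpMatrix m)
  have := three_mul_zdi_le (sharpMatrix m)
  rw [reducingKer_sharpMatrix, finrank_bot, Fintype.card_fin] at this
  omega

end Sharpness

end ZeroDilation

open ZeroDilation

/-- Theorem 3.2. -/
theorem zdi_gt_two_thirds_reducing {n : ℕ} (A : Matrix (Fin n) (Fin n) ℂ) :
    (2 * n / 3 < zdi A →
      3 * zdi A - 2 * n ≤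
        Module.finrank ℂ ↥(LinearMap.ker A.mulVecLin ⊓ LinearMap.ker Aᴴ.mulVecLin) ∧
      ∃ B : Matrix (Fin (3 * (n - zdi A))) (Fin (3 * (n - zdi A))) ℂ,
        zdi B = 2 * (n - zdi A) ∧
        UnitSimG A (Matrix.fromBlocks B 0 0
          (0 : Matrix (Fin (3 * zdi A - 2 * n)) (Fin (3 * zdi A - 2 * n)) ℂ))) ∧
    (∀ m : ℕ, 1 ≤ m → ∃ B : Matrix (Fin m) (Fin m) ℂ, zdi B = 2 * m / 3 ∧
      LinearMap.ker B.mulVecLin ⊓ LinearMap.ker Bᴴ.mulVecLin = ⊥) := by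
  refine ⟨fun hd => ?_, fun m _ => ⟨sharpMatrix m, zdi_sharpMatrix m, reducingKer_sharpMatrix m⟩⟩
  have hle : zdi A ≤ n := by simpa only [Fintype.card_fin] using zdi_le_card A
  have hker : 3 * zdi A - 2 * n ≤ Module.finrank ℂ (reducingKer A) := by
    simpa only [Fintype.card_fin, tsub_le_iff_left] using three_mul_zdi_le A
  have hcard : n = 3 * (n - zdi A) + (3 * zdi A - 2 * n) := by omega
  obtain ⟨B, hAB⟩ := exists_unitSimG_fromBlocks_zero A
    (p := Fin (3 * (n - zdi A))) (l := Fin (3 * zdi A - 2 * n))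
    (by simpa only [Fintype.card_fin] using hcard) (by rwa [Fintype.card_fin])
  have hzdi : zdi A = zdi B + (3 * zdi A - 2 * n) := by
    rw [← Fintype.card_fin (3 * zdi A - 2 * n), ← zdi_fromBlocks_zero B]
    exact zdi_eq_of_unitSimG hAB
  exact ⟨hker, B, by omega, hAB⟩
end

section
/- Let A be an n-by-n normal complex matrix with k = dim ker A. Then k ≤ d(A) ≤ ⌊(n + k)/2⌋. Moreover, let λ₁, …, λ_{n−k} be the nonzero eigenvalues of A (counted with multiplicity) arranged so that arg λ₁ ≤ ⋯ ≤ arg λ_{n−k}, where arg takes values in [0, 2π). Then: (a) d(A) = k if and only if 0 is not in the convex hull of {λ₁, …, λ_{n−k}}; and (b) d(A) = ⌊(n + k)/2⌋ if and only if, when n − k is even, arg λ_{j+(n−k)/2} − arg λ_j = π holds for all 1 ≤ j ≤ (n−k)/2, and, when n − k is odd, arg λ_{j+(n−k−1)/2} − arg λ_j ≤ π for all 1 ≤ j ≤ (n−k+1)/2 and arg λ_{j−(n−k+1)/2} − arg λ_j ≤ −π for all (n−k+3)/2 ≤ j ≤ n−k. -/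
open Matrix Polynomial

/-
A normal matrix is unitarily similar to the diagonal matrix of its eigenvalues, so everything is
about isotropic frames of `diag(0, …, 0, λ₁, …, λₘ)`.

Upper bounds: a subspace on which the compression vanishes meets trivially any coordinate subspace
on which the real part of `c • A` is definite, hence its dimension is at most the number of diagonal
entries in the closed half plane `0 ≤ re (c * z)`. A generic `c` and `-c` give the bound
`⌊(n + k) / 2⌋`; a `c` separating `0` from the convex hull gives `k`; rotating by the mean of two
arguments whose difference is on the wrong side of `π` gives fewer than `⌊(n + k) / 2⌋`.

Lower bounds: a convex combination of eigenvalues equal to `0` gives one isotropic vector, and for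
even `m` the hypothesis of (b) splits the nonzero eigenvalues into pairs on opposite rays. For odd
`m` it says that, after interleaving, the eigenvalues lie with alternating signs on rays of monotone
angles within a half turn; up to a rotation and positive factors they are `±(1 + tᵢ * I)` with
increasing slopes `tᵢ`, and the signs are those of the Lagrange nodal weights of the `tᵢ`. Weighted
monomials in the `tᵢ` are then an isotropic family, because divided differences annihilate
polynomials of low degree.
-/

section IsotropicFrames

variable {ι ι' κ κ' : Type*} [Fintype ι] [Fintype ι'] [DecidableEq κ] [DecidableEq κ']

/-- An isotropic frame of `A` indexed by `κ`: an isometry with columns indexed by `κ` that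
compresses `A` to zero, so that the zero matrix over `κ` dilates to `A`. The zero-dilation index
`zdi A` is the largest size of such a frame. -/
def HasIsotropicFrame (A : Matrix ι ι ℂ) (κ : Type*) [DecidableEq κ] : Prop :=
  ∃ V : Matrix ι κ ℂ, Vᴴ * V = 1 ∧ Vᴴ * A * V = 0

namespace HasIsotropicFrame

variable {A : Matrix ι ι ℂ}

theorem comp_embedding (h : HasIsotropicFrame A κ) (f : κ' ↪ κ) : HasIsotropicFrame A κ' := by
  obtain ⟨V, hV, hAV⟩ := h
  have compress (B : Matrix ι ι ℂ) :
      (V.submatrix id f)ᴴ * B * V.submatrix id f = (Vᴴ * B * V).submatrix f f := by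
    ext i j
    simp [Matrix.mul_apply]
  refine ⟨V.submatrix id f, ?_, ?_⟩
  · classical simpa [hV, submatrix_one_embedding] using compress 1
  · rw [compress, hAV, submatrix_zero]; rfl

theorem of_compression {U : Matrix ι ι' ℂ} [DecidableEq ι'] (hU : Uᴴ * U = 1)
    (h : HasIsotropicFrame (Uᴴ * A * U) κ) : HasIsotropicFrame A κ := by
  obtain ⟨V, hV, hAV⟩ := h
  refine ⟨U * V, ?_, ?_⟩
  · calc (U * V)ᴴ * (U * V) = Vᴴ * (Uᴴ * U) * V := by
          simp only [conjTranspose_mul, Matrix.mul_assoc]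
      _ = 1 := by rw [hU, Matrix.mul_one, hV]
  · calc (U * V)ᴴ * A * (U * V) = Vᴴ * (Uᴴ * A * U) * V := by
          simp only [conjTranspose_mul, Matrix.mul_assoc]
      _ = 0 := hAV

theorem of_submatrix (f : ι' ↪ ι) (h : HasIsotropicFrame (A.submatrix f f) κ) :
    HasIsotropicFrame A κ := by
  classical
  have compress (B : Matrix ι ι ℂ) :
      ((1 : Matrix ι ι ℂ).submatrix id f)ᴴ * B * (1 : Matrix ι ι ℂ).submatrix id f =
        B.submatrix f f := by
    ext i j
    simp [Matrix.mul_apply, Matrix.one_apply]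
  refine of_compression (U := (1 : Matrix ι ι ℂ).submatrix id f) ?_ (by rwa [compress])
  simpa [submatrix_one_embedding] using compress 1

theorem fromBlocks {B : Matrix ι' ι' ℂ} (hA : HasIsotropicFrame A κ)
    (hB : HasIsotropicFrame B κ') : HasIsotropicFrame (fromBlocks A 0 0 B) (κ ⊕ κ') := by
  obtain ⟨V, hV, hAV⟩ := hA
  obtain ⟨W, hW, hBW⟩ := hB
  exact ⟨Matrix.fromBlocks V 0 0 W, by simp [fromBlocks_conjTranspose, fromBlocks_multiply, hV, hW],
    by simp [fromBlocks_conjTranspose, fromBlocks_multiply, hAV, hBW]⟩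

theorem blockDiagonal {o : Type*} [Fintype o] [DecidableEq o] {A : o → Matrix ι ι ℂ}
    (h : ∀ a, HasIsotropicFrame (A a) κ) : HasIsotropicFrame (blockDiagonal A) (κ × o) := by
  choose V hV hAV using h
  refine ⟨Matrix.blockDiagonal V, ?_, ?_⟩
  · have : (fun a => (V a)ᴴ * V a) = 1 := funext hV
    rw [blockDiagonal_conjTranspose, ← blockDiagonal_mul, this, blockDiagonal_one]
  · have : (fun a => (V a)ᴴ * A a * V a) = 0 := funext hAV
    rw [blockDiagonal_conjTranspose, ← blockDiagonal_mul, ← blockDiagonal_mul, this,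
      blockDiagonal_zero]

open scoped ComplexOrder MatrixOrder Matrix.Norms.L2Operator in
theorem of_mulVec_injective [Fintype κ] {X : Matrix ι κ ℂ} (hX : Function.Injective X.mulVec)
    (hAX : Xᴴ * A * X = 0) : HasIsotropicFrame A κ := by
  obtain ⟨B, hB, hG⟩ :=
    CStarAlgebra.isStrictlyPositive_iff_eq_star_mul_self.mp
      (PosDef.conjTranspose_mul_self X hX).isStrictlyPositive
  have hBdet : IsUnit B.det := (isUnit_iff_isUnit_det B).mp hB
  refine ⟨X * B⁻¹, ?_, ?_⟩
  · calc (X * B⁻¹)ᴴ * (X * B⁻¹) = (B⁻¹)ᴴ * (Xᴴ * X) * B⁻¹ := by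
          simp only [conjTranspose_mul, Matrix.mul_assoc]
      _ = (B * B⁻¹)ᴴ * (B * B⁻¹) := by
          rw [hG, star_eq_conjTranspose]
          simp only [conjTranspose_mul, Matrix.mul_assoc]
      _ = 1 := by rw [mul_nonsing_inv B hBdet, conjTranspose_one, Matrix.mul_one]
  · calc (X * B⁻¹)ᴴ * A * (X * B⁻¹) = (B⁻¹)ᴴ * (Xᴴ * A * X) * B⁻¹ := by
          simp only [conjTranspose_mul, Matrix.mul_assoc]
      _ = 0 := by rw [hAX, Matrix.mul_zero, Matrix.zero_mul]

end HasIsotropicFrame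

theorem mulVec_injective_of_conjTranspose_mul_self_eq_one [Fintype κ] {V : Matrix ι κ ℂ}
    (hV : Vᴴ * V = 1) : Function.Injective V.mulVec :=
  Function.LeftInverse.injective (g := Vᴴ.mulVec) fun x => by rw [mulVec_mulVec, hV, one_mulVec]

theorem HasIsotropicFrame.card_le [Fintype κ] {A : Matrix ι ι ℂ} (h : HasIsotropicFrame A κ) :
    Fintype.card κ ≤ Fintype.card ι := by
  obtain ⟨V, hV, -⟩ := h
  simpa using LinearMap.finrank_le_finrank_of_injective (f := V.mulVecLin)
    (mulVec_injective_of_conjTranspose_mul_self_eq_one hV)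

theorem le_zdi_iff {A : Matrix ι ι ℂ} {r : ℕ} : r ≤ zdi A ↔ HasIsotropicFrame A (Fin r) := by
  have hbdd : BddAbove {r : ℕ | HasIsotropicFrame A (Fin r)} :=
    ⟨Fintype.card ι, fun r h => by simpa using h.card_le⟩
  refine ⟨fun hr => ?_, fun h => le_csSup hbdd h⟩
  have hmax : HasIsotropicFrame A (Fin (zdi A)) :=
    Nat.sSup_mem (s := {r : ℕ | HasIsotropicFrame A (Fin r)})
      ⟨0, 0, Subsingleton.elim _ _, Subsingleton.elim _ _⟩ hbdd
  exact hmax.comp_embedding (Fin.castLEEmb hr)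

theorem zdi_add_zdi_le_zdi_fromBlocks (A : Matrix ι ι ℂ) (B : Matrix ι' ι' ℂ) :
    zdi A + zdi B ≤ zdi (fromBlocks A 0 0 B) :=
  le_zdi_iff.mpr <| ((le_zdi_iff.mp le_rfl).fromBlocks (le_zdi_iff.mp le_rfl)).comp_embedding
    finSumFinEquiv.symm.toEmbedding

theorem card_le_zdi_zero : Fintype.card ι ≤ zdi (0 : Matrix ι ι ℂ) := by
  classical
  have h : HasIsotropicFrame (0 : Matrix ι ι ℂ) ι := ⟨1, by simp, by simp⟩
  exact le_zdi_iff.mpr (h.comp_embedding (Fintype.equivFin ι).symm.toEmbedding)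

theorem UnitSim.zdi_eq [DecidableEq ι] {A B : Matrix ι ι ℂ} (h : UnitSim A B) :
    zdi A = zdi B := by
  obtain ⟨U, hU, rfl⟩ := h
  have hUU : Uᴴ * U = 1 := mem_unitaryGroup_iff'.mp hU
  have hUU' : U * Uᴴ = 1 := mem_unitaryGroup_iff.mp hU
  refine le_antisymm (le_zdi_iff.mpr ?_)
    (le_zdi_iff.mpr ((le_zdi_iff.mp le_rfl).of_compression hUU))
  refine HasIsotropicFrame.of_compression (U := Uᴴ) (by rwa [conjTranspose_conjTranspose]) ?_
  have hback : Uᴴᴴ * (Uᴴ * A * U) * Uᴴ = A :=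
    calc Uᴴᴴ * (Uᴴ * A * U) * Uᴴ = U * Uᴴ * A * (U * Uᴴ) := by
          simp only [conjTranspose_conjTranspose, Matrix.mul_assoc]
      _ = A := by rw [hUU', Matrix.one_mul, Matrix.mul_one]
  rw [hback]
  exact le_zdi_iff.mp le_rfl

theorem zdi_reindex (e : ι ≃ ι') (A : Matrix ι ι ℂ) : zdi (reindex e e A) = zdi A := by
  refine le_antisymm (le_zdi_iff.mpr ?_) (le_zdi_iff.mpr ?_)
  · exact (le_zdi_iff.mp le_rfl).of_submatrix e.symm.toEmbedding
  · refine HasIsotropicFrame.of_submatrix e.toEmbedding ?_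
    simpa using le_zdi_iff.mp le_rfl

theorem UnitSimG.zdi_eq [DecidableEq ι] [DecidableEq ι'] {A : Matrix ι ι ℂ} {B : Matrix ι' ι' ℂ}
    (h : UnitSimG A B) : zdi A = zdi B := by
  obtain ⟨e, he⟩ := h
  rw [← zdi_reindex e, he.zdi_eq]

end IsotropicFrames

section Diagonalization

variable {ι κ : Type*} [Fintype ι] [Fintype κ]

theorem exists_equiv_comp_eq_of_map_univ_eq {γ : Type*} {f : ι → γ} {g : κ → γ}
    (h : (Finset.univ : Finset ι).val.map f = (Finset.univ : Finset κ).val.map g) :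
    ∃ e : ι ≃ κ, g ∘ e = f := by
  classical
  have hfiber (c : γ) : Fintype.card {i // f i = c} = Fintype.card {j // g j = c} := by
    have := congrArg (Multiset.count c) h
    rw [Multiset.count_map, Multiset.count_map, ← Finset.filter_val, ← Finset.filter_val] at this
    simpa only [Fintype.card_subtype, eq_comm (a := c), Finset.card_val] using this
  exact ⟨Equiv.ofFiberEquiv fun c => Fintype.equivOfCardEq (hfiber c),
    funext fun i => Equiv.ofFiberEquiv_map _ i⟩

theorem map_univ_eq_of_prod_X_sub_C_eq {R : Type*} [CommRing R] [IsDomain R] {f : ι → R} {g : κ → R}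
    (h : ∏ i, (X - C (f i)) = ∏ j, (X - C (g j))) :
    (Finset.univ : Finset ι).val.map f = (Finset.univ : Finset κ).val.map g := by
  have hroots := congrArg roots h
  rw [roots_prod _ _ (Finset.prod_ne_zero_iff.mpr fun i _ => X_sub_C_ne_zero _),
    roots_prod _ _ (Finset.prod_ne_zero_iff.mpr fun i _ => X_sub_C_ne_zero _)] at hroots
  simpa only [roots_X_sub_C, Multiset.bind_singleton] using hroots

variable [DecidableEq ι] [DecidableEq κ]

open scoped ComplexStarModule in
theorem exists_orthonormalBasis_of_isStarNormal {E : Type*} [NormedAddCommGroup E]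
    [InnerProductSpace ℂ E] [FiniteDimensional ℂ E] (T : E →ₗ[ℂ] E) [IsStarNormal T] :
    ∃ (b : OrthonormalBasis (Fin (Module.finrank ℂ E)) ℂ E) (μ : Fin (Module.finrank ℂ E) → ℂ),
      ∀ a, T (b a) = μ a • b a := by
  classical
  -- The real and imaginary parts of `T` commute, hence are simultaneously diagonalizable.
  have hRe : (ℜ T : E →ₗ[ℂ] E).IsSymmetric :=
    (LinearMap.isSymmetric_iff_isSelfAdjoint _).mpr (ℜ T).2
  have hIm : (ℑ T : E →ₗ[ℂ] E).IsSymmetric :=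
    (LinearMap.isSymmetric_iff_isSelfAdjoint _).mpr (ℑ T).2
  let W : ℂ × ℂ → Submodule ℂ E := fun μ =>
    Module.End.eigenspace (ℜ T : E →ₗ[ℂ] E) μ.2 ⊓ Module.End.eigenspace (ℑ T : E →ₗ[ℂ] E) μ.1
  have hW : DirectSum.IsInternal W :=
    LinearMap.IsSymmetric.directSum_isInternal_of_commute hRe hIm (Commute.realPart_imaginaryPart T)
  have horth : OrthogonalFamily ℂ (fun μ => W μ) fun μ => (W μ).subtypeₗᵢ :=
    LinearMap.IsSymmetric.orthogonalFamily_eigenspace_inf_eigenspace hRe hIm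
  have : Fintype {μ // W μ ≠ ⊥} := hW.submodule_iSupIndep.fintypeNeBotOfFiniteDimensional
  have hW' := DirectSum.isInternal_ne_bot_iff.mpr hW
  have horth' := horth.comp (γ := {μ // W μ ≠ ⊥}) Subtype.val_injective
  let μ a := (hW'.subordinateOrthonormalBasisIndex rfl a horth').1
  refine ⟨hW'.subordinateOrthonormalBasis rfl horth',
    fun a => (μ a).2 + Complex.I * (μ a).1, fun a => ?_⟩
  obtain ⟨hRea, hIma⟩ := hW'.subordinateOrthonormalBasis_subordinate rfl a horth'
  conv_lhs => rw [← realPart_add_I_smul_imaginaryPart T]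
  rw [LinearMap.add_apply, LinearMap.smul_apply, Module.End.mem_eigenspace_iff.mp hRea,
    Module.End.mem_eigenspace_iff.mp hIma, smul_smul, ← add_smul]

theorem exists_unitSim_diagonal {A : Matrix ι ι ℂ} (hA : IsStarNormal A) :
    ∃ μ : ι → ℂ, UnitSim A (diagonal μ) := by
  let std := EuclideanSpace.basisFun ι ℂ
  let T := (LinearMap.toMatrixOrthonormal std).symm A
  have : IsStarNormal T := hA.map _
  obtain ⟨b, μ, hb⟩ := exists_orthonormalBasis_of_isStarNormal T
  let e : Fin (Module.finrank ℂ (EuclideanSpace ℂ ι)) ≃ ι := Fintype.equivOfCardEq (by simp)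
  let c := b.reindex e
  have hTA : LinearMap.toMatrix std.toBasis std.toBasis T = A :=
    (LinearMap.toMatrixOrthonormal std).apply_symm_apply A
  have hconj : (std.toBasis.toMatrix c.toBasis)ᴴ = c.toBasis.toMatrix std.toBasis := by
    ext i j
    simp [Module.Basis.toMatrix_apply, OrthonormalBasis.repr_apply_apply]
  refine ⟨μ ∘ e.symm, std.toBasis.toMatrix c.toBasis,
    std.toMatrix_orthonormalBasis_mem_unitary c, ?_⟩
  rw [hconj, ← hTA, basis_toMatrix_mul_linearMap_toMatrix_mul_basis_toMatrix]
  ext i j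
  simp +contextual [LinearMap.toMatrix_apply, c, hb, diagonal_apply]

theorem UnitSim.charpoly_eq {A B : Matrix ι ι ℂ} (h : UnitSim A B) : A.charpoly = B.charpoly := by
  obtain ⟨U, hU, rfl⟩ := h
  have hUU : U * Uᴴ = 1 := mem_unitaryGroup_iff.mp hU
  rw [Matrix.mul_assoc, Matrix.charpoly_mul_comm, Matrix.mul_assoc, hUU, Matrix.mul_one]

theorem unitSimG_diagonal_of_charpoly_eq {A : Matrix ι ι ℂ} (hA : IsStarNormal A) {d : κ → ℂ}
    (hchar : A.charpoly = ∏ j, (X - C (d j))) : UnitSimG A (diagonal d) := by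
  obtain ⟨μ, U, hU, hUA⟩ := exists_unitSim_diagonal hA
  have hroots : ∏ i, (X - C (μ i)) = ∏ j, (X - C (d j)) := by
    rw [← charpoly_diagonal, ← UnitSim.charpoly_eq ⟨U, hU, hUA⟩, hchar]
  obtain ⟨e, rfl⟩ := exists_equiv_comp_eq_of_map_univ_eq (map_univ_eq_of_prod_X_sub_C_eq hroots)
  refine ⟨e, reindex e e U, ?_, ?_⟩
  · rw [mem_unitaryGroup_iff'] at hU ⊢
    rw [star_eq_conjTranspose] at hU ⊢
    simp [hU]
  · simp [hUA, submatrix_mul_equiv]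

end Diagonalization

section HalfPlaneBounds

variable {ι κ : Type*} [Fintype ι] [DecidableEq ι] [Fintype κ] [DecidableEq κ]

theorem star_dotProduct_diagonal_mulVec (d x : ι → ℂ) :
    star x ⬝ᵥ diagonal d *ᵥ x = ∑ i, d i * Complex.normSq (x i) := by
  simp only [dotProduct, mulVec_diagonal, Pi.star_apply, RCLike.star_def]
  exact Finset.sum_congr rfl fun i _ => by rw [Complex.normSq_eq_conj_mul_self]; ring

theorem eq_zero_of_star_dotProduct_diagonal_mulVec_eq_zero {d x : ι → ℂ} (c : ℂ)
    (hform : star x ⬝ᵥ diagonal d *ᵥ x = 0) (hx : ∀ i, 0 ≤ (c * d i).re → x i = 0) : x = 0 := by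
  have hsum : ∑ i, (c * d i).re * Complex.normSq (x i) = 0 := by
    rw [star_dotProduct_diagonal_mulVec] at hform
    simpa only [Finset.mul_sum, Complex.re_sum, ← mul_assoc, Complex.re_mul_ofReal, mul_zero,
      Complex.zero_re] using congrArg (fun z => (c * z).re) hform
  have hterm (i : ι) : (c * d i).re * Complex.normSq (x i) ≤ 0 := by
    rcases le_or_gt 0 (c * d i).re with hi | hi
    · simp [hx i hi]
    · exact mul_nonpos_of_nonpos_of_nonneg hi.le (Complex.normSq_nonneg _)
  ext i
  rcases le_or_gt 0 (c * d i).re with hi | hi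
  · exact hx i hi
  · have := (Finset.sum_eq_zero_iff_of_nonpos fun i _ => hterm i).mp hsum i (Finset.mem_univ i)
    exact Complex.normSq_eq_zero.mp ((mul_eq_zero.mp this).resolve_left hi.ne)

theorem HasIsotropicFrame.card_le_card_re_nonneg {d : ι → ℂ}
    (h : HasIsotropicFrame (diagonal d) κ) (c : ℂ) :
    Fintype.card κ ≤ Finset.card {i | 0 ≤ (c * d i).re} := by
  obtain ⟨V, hV, hdV⟩ := h
  let R : (κ → ℂ) →ₗ[ℂ] {i // 0 ≤ (c * d i).re} → ℂ :=
    (V.submatrix Subtype.val id).mulVecLin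
  suffices hR : Function.Injective R by
    simpa [Fintype.card_subtype] using LinearMap.finrank_le_finrank_of_injective hR
  refine (injective_iff_map_eq_zero R).mpr fun v hv => ?_
  have hform : star (V *ᵥ v) ⬝ᵥ diagonal d *ᵥ (V *ᵥ v) = 0 :=
    calc star (V *ᵥ v) ⬝ᵥ diagonal d *ᵥ (V *ᵥ v) = star v ⬝ᵥ (Vᴴ * diagonal d * V) *ᵥ v := by
          rw [star_mulVec, ← dotProduct_mulVec, mulVec_mulVec, mulVec_mulVec, Matrix.mul_assoc]
      _ = 0 := by rw [hdV, zero_mulVec, dotProduct_zero]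
  have hVv : V *ᵥ v = 0 :=
    eq_zero_of_star_dotProduct_diagonal_mulVec_eq_zero c hform fun i hi => congrFun hv ⟨i, hi⟩
  exact mulVec_injective_of_conjTranspose_mul_self_eq_one hV (hVv.trans (mulVec_zero V).symm)

theorem zdi_diagonal_sumElim_zero_le (l : ι → ℂ) (c : ℂ) :
    zdi (diagonal (Sum.elim (0 : κ → ℂ) l)) ≤
      Fintype.card κ + Finset.card {i | 0 ≤ (c * l i).re} := by
  have h := (le_zdi_iff.mp le_rfl :
    HasIsotropicFrame (diagonal (Sum.elim (0 : κ → ℂ) l)) _).card_le_card_re_nonneg c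
  rw [Fintype.card_fin] at h
  refine h.trans_eq ?_
  simp only [Finset.card_filter, Fintype.sum_sum_type, Sum.elim_inl, Sum.elim_inr, Pi.zero_apply,
    mul_zero, Complex.zero_re, le_refl, if_true, Finset.sum_const, Finset.card_univ, smul_eq_mul,
    mul_one]
  congr!

theorem card_le_zdi_diagonal_sumElim_zero (l : ι → ℂ) :
    Fintype.card κ + zdi (diagonal l) ≤ zdi (diagonal (Sum.elim (0 : κ → ℂ) l)) := by
  rw [← fromBlocks_diagonal, diagonal_zero']
  exact (Nat.add_le_add_right card_le_zdi_zero _).trans (zdi_add_zdi_le_zdi_fromBlocks _ _)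

theorem exists_forall_re_mul_ne_zero {ι : Type*} [Finite ι] {l : ι → ℂ} (hl : ∀ i, l i ≠ 0) :
    ∃ c : ℂ, ∀ i, (c * l i).re ≠ 0 := by
  refine Module.Dual.exists_forall_ne_zero_of_forall_exists
    (fun i => Complex.reLm ∘ₗ LinearMap.mulRight ℝ (l i)) fun i => ⟨star (l i), ?_⟩
  simpa [← Complex.normSq_eq_conj_mul_self] using hl i

theorem zdi_diagonal_sumElim_zero_le_half {l : ι → ℂ} (hl : ∀ i, l i ≠ 0) :
    zdi (diagonal (Sum.elim (0 : κ → ℂ) l)) ≤ Fintype.card κ + Fintype.card ι / 2 := by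
  obtain ⟨c, hc⟩ := exists_forall_re_mul_ne_zero hl
  have hneg : Finset.univ.filter (fun i => 0 ≤ (-c * l i).re) =
      Finset.univ.filter fun i => ¬ 0 ≤ (c * l i).re :=
    Finset.filter_congr fun i _ => by
      rw [neg_mul, Complex.neg_re, not_le, Left.nonneg_neg_iff, le_iff_lt_or_eq]
      exact or_iff_left (hc i)
  have hcard := Finset.card_filter_add_card_filter_not (s := Finset.univ)
    fun i => 0 ≤ (c * l i).re
  have hpos := zdi_diagonal_sumElim_zero_le (κ := κ) l c
  have hneg' := zdi_diagonal_sumElim_zero_le (κ := κ) l (-c)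
  rw [hneg] at hneg'
  rw [Finset.card_univ] at hcard
  omega

theorem exists_forall_re_mul_neg_of_zero_notMem_convexHull {ι : Type*} [Finite ι] {l : ι → ℂ}
    (h0 : (0 : ℂ) ∉ convexHull ℝ (Set.range l)) : ∃ c : ℂ, ∀ i, (c * l i).re < 0 := by
  have hclosed : IsClosed (convexHull ℝ (Set.range l)) :=
    ((Set.finite_range l).isCompact_convexHull ℝ).isClosed
  obtain ⟨f, u, hf, hu⟩ := geometric_hahn_banach_closed_point (convex_convexHull ℝ _) hclosed h0
  refine ⟨star ((InnerProductSpace.toDual ℝ ℂ).symm f), fun i => ?_⟩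
  have hfi : f (l i) < 0 :=
    (hf _ (subset_convexHull ℝ _ ⟨i, rfl⟩)).trans (hu.trans_eq (map_zero f))
  rwa [← InnerProductSpace.toDual_symm_apply, Complex.inner, mul_comm] at hfi

theorem zdi_diagonal_sumElim_zero_le_of_zero_notMem_convexHull {l : ι → ℂ}
    (h0 : (0 : ℂ) ∉ convexHull ℝ (Set.range l)) :
    zdi (diagonal (Sum.elim (0 : κ → ℂ) l)) ≤ Fintype.card κ := by
  obtain ⟨c, hc⟩ := exists_forall_re_mul_neg_of_zero_notMem_convexHull h0
  have := zdi_diagonal_sumElim_zero_le (κ := κ) l c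
  rwa [Finset.filter_false_of_mem fun i _ => (hc i).not_ge, Finset.card_empty] at this

end HalfPlaneBounds

section Arguments

theorem arg2pi_nonneg (z : ℂ) : 0 ≤ arg2pi z := by
  unfold arg2pi
  split_ifs with h
  · exact h
  · linarith [Complex.neg_pi_lt_arg z, Real.pi_pos]

theorem arg2pi_lt_two_pi (z : ℂ) : arg2pi z < 2 * Real.pi := by
  unfold arg2pi
  split_ifs with h
  · linarith [Complex.arg_le_pi z, Real.pi_pos]
  · linarith

theorem norm_mul_exp_arg2pi_mul_I (z : ℂ) : ‖z‖ * Complex.exp (arg2pi z * Complex.I) = z := by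
  conv_rhs => rw [← Complex.norm_mul_exp_arg_mul_I z]
  unfold arg2pi
  split_ifs with h
  · rfl
  · push_cast
    rw [add_mul, Complex.exp_add, Complex.exp_two_pi_mul_I, mul_one]

theorem re_exp_neg_mul_I_mul (φ : ℝ) (z : ℂ) :
    (Complex.exp (-φ * Complex.I) * z).re = ‖z‖ * Real.cos (arg2pi z - φ) := by
  have hrot : Complex.exp (-φ * Complex.I) * (‖z‖ * Complex.exp (arg2pi z * Complex.I)) =
      ‖z‖ * Complex.exp ((arg2pi z - φ : ℝ) * Complex.I) := by
    rw [mul_left_comm, ← Complex.exp_add]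
    push_cast
    ring_nf
  rw [← norm_mul_exp_arg2pi_mul_I z, hrot, Complex.re_ofReal_mul, Complex.exp_ofReal_mul_I_re,
    norm_mul_exp_arg2pi_mul_I]

variable {ι κ : Type*} [Fintype ι] [LinearOrder ι] [LocallyFiniteOrder ι] [Fintype κ]
  [DecidableEq κ] {l : ι → ℂ}

theorem zdi_diagonal_sumElim_zero_le_card_Ioo (hl : ∀ i, l i ≠ 0)
    (hsort : Monotone fun i => arg2pi (l i)) {a b : ι}
    (hab : Real.pi < arg2pi (l b) - arg2pi (l a)) :
    zdi (diagonal (Sum.elim (0 : κ → ℂ) l)) ≤ Fintype.card κ + (Finset.Ioo a b).card := by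
  set φ := (arg2pi (l a) + arg2pi (l b)) / 2 with hφ
  refine (zdi_diagonal_sumElim_zero_le l (Complex.exp (-φ * Complex.I))).trans ?_
  gcongr
  intro i hi
  have hcos : 0 ≤ Real.cos (arg2pi (l i) - φ) := by
    have := (Finset.mem_filter.mp hi).2
    rw [re_exp_neg_mul_I_mul] at this
    exact nonneg_of_mul_nonneg_right this (norm_pos_iff.mpr (hl i))
  have ha := arg2pi_nonneg (l a)
  have hb := arg2pi_lt_two_pi (l b)
  have hi0 := arg2pi_nonneg (l i)
  have hi2 := arg2pi_lt_two_pi (l i)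
  refine Finset.mem_Ioo.mpr ⟨?_, ?_⟩ <;> by_contra! hle <;> refine hcos.not_gt ?_
  · have : arg2pi (l i) ≤ arg2pi (l a) := hsort hle
    rw [← Real.cos_neg]
    exact Real.cos_neg_of_pi_div_two_lt_of_lt (by linarith) (by linarith)
  · have : arg2pi (l b) ≤ arg2pi (l i) := hsort hle
    exact Real.cos_neg_of_pi_div_two_lt_of_lt (by linarith) (by linarith)

theorem zdi_diagonal_sumElim_zero_le_card_compl_Icc (hl : ∀ i, l i ≠ 0)
    (hsort : Monotone fun i => arg2pi (l i)) {a b : ι}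
    (hab : arg2pi (l b) - arg2pi (l a) < Real.pi) :
    zdi (diagonal (Sum.elim (0 : κ → ℂ) l)) ≤ Fintype.card κ + (Finset.Icc a b)ᶜ.card := by
  set φ := (arg2pi (l a) + arg2pi (l b)) / 2 with hφ
  refine (zdi_diagonal_sumElim_zero_le l (-Complex.exp (-φ * Complex.I))).trans ?_
  gcongr
  intro i hi
  rw [Finset.mem_compl, Finset.mem_Icc]
  rintro ⟨hai, hib⟩
  have ha : arg2pi (l a) ≤ arg2pi (l i) := hsort hai
  have hb : arg2pi (l i) ≤ arg2pi (l b) := hsort hib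
  have hcos : 0 < Real.cos (arg2pi (l i) - φ) :=
    Real.cos_pos_of_mem_Ioo ⟨by linarith, by linarith⟩
  have hre := (Finset.mem_filter.mp hi).2
  rw [neg_mul, Complex.neg_re, re_exp_neg_mul_I_mul] at hre
  linarith [mul_pos (norm_pos_iff.mpr (hl i)) hcos]

end Arguments

section ConvexHull

variable {ι : Type*} [Fintype ι] [DecidableEq ι]

theorem hasIsotropicFrame_diagonal_of_zero_mem_convexHull {d : ι → ℂ}
    (h : (0 : ℂ) ∈ convexHull ℝ (Set.range d)) : HasIsotropicFrame (diagonal d) (Fin 1) := by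
  rw [convexHull_range_eq_exists_affineCombination] at h
  obtain ⟨s, w, hw, hw1, hwd⟩ := h
  rw [Finset.affineCombination_eq_linear_combination _ _ _ hw1] at hwd
  set x : ι → ℂ := fun i => if i ∈ s then (√(w i) : ℂ) else 0 with hx
  have weighted_sum (f : ι → ℂ) : ∑ i, star (x i) * f i * x i = ∑ i ∈ s, w i • f i := by
    have hsq (i) (hi : i ∈ s) : (√(w i) : ℂ) * √(w i) = w i := by
      rw [← Complex.ofReal_mul, Real.mul_self_sqrt (hw i hi)]
    rw [← Finset.sum_subset s.subset_univ (fun i _ hi => by simp [hx, hi])]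
    refine Finset.sum_congr rfl fun i hi => ?_
    simp only [hx, hi, if_true, RCLike.star_def, Complex.conj_ofReal, Complex.real_smul]
    linear_combination f i * hsq i hi
  refine ⟨Matrix.of fun i _ => x i, ?_, ?_⟩
  · ext a b
    have total : ∑ i ∈ s, w i • (1 : ℂ) = 1 := by
      rw [← Finset.sum_smul, hw1, one_smul]
    rw [Subsingleton.elim b a, one_apply_eq]
    simpa [Matrix.mul_apply] using (weighted_sum 1).trans total
  · ext a b
    rw [Matrix.mul_assoc]
    simpa [Matrix.mul_apply, diagonal_apply, mul_assoc] using (weighted_sum d).trans hwd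

theorem zdi_diagonal_sumElim_zero_eq_card_iff {κ : Type*} [Fintype κ] [DecidableEq κ]
    {l : ι → ℂ} :
    zdi (diagonal (Sum.elim (0 : κ → ℂ) l)) = Fintype.card κ ↔
      (0 : ℂ) ∉ convexHull ℝ (Set.range l) := by
  have lower := card_le_zdi_diagonal_sumElim_zero (κ := κ) l
  refine ⟨fun heq h0 => ?_, fun h0 => ?_⟩
  · have : 1 ≤ zdi (diagonal l) :=
      le_zdi_iff.mpr (hasIsotropicFrame_diagonal_of_zero_mem_convexHull h0)
    omega
  · exact (zdi_diagonal_sumElim_zero_le_of_zero_notMem_convexHull h0).antisymm (by omega)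

theorem zero_mem_convexHull_pair_of_arg2pi_sub_eq_pi {z w : ℂ} (hz : z ≠ 0)
    (h : arg2pi w - arg2pi z = Real.pi) : (0 : ℂ) ∈ convexHull ℝ {z, w} := by
  have cancel : (‖w‖ : ℂ) * z + ‖z‖ * w = 0 := by
    have hw := norm_mul_exp_arg2pi_mul_I w
    rw [show arg2pi w = arg2pi z + Real.pi by linarith, Complex.ofReal_add, add_mul,
      Complex.exp_add, Complex.exp_pi_mul_I] at hw
    linear_combination (-‖w‖ : ℂ) * norm_mul_exp_arg2pi_mul_I z - (‖z‖ : ℂ) * hw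
  have hpos : 0 < ‖w‖ + ‖z‖ := by positivity
  rw [convexHull_pair, mem_segment_iff_div]
  refine ⟨‖w‖, ‖z‖, norm_nonneg w, norm_nonneg z, hpos, ?_⟩
  simp only [Complex.real_smul, Complex.ofReal_div, div_mul_eq_mul_div, ← add_div, cancel, zero_div]

end ConvexHull

section Interpolation

theorem sum_nodalWeight_mul_eval_eq_zero {F ι : Type*} [Field F] [DecidableEq ι] {s : Finset ι}
    {v : ι → F} (hv : Set.InjOn v s) {P : F[X]} (hP : P.natDegree + 1 < s.card) :
    ∑ i ∈ s, Lagrange.nodalWeight s v i * P.eval (v i) = 0 := by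
  have hdeg : P.degree < s.card :=
    P.degree_le_natDegree.trans_lt (by exact_mod_cast (Nat.lt_succ_self _).trans hP)
  have := Lagrange.coeff_eq_sum hv hdeg
  rw [coeff_eq_zero_of_natDegree_lt (by omega)] at this
  rw [this]
  refine Finset.sum_congr rfl fun i _ => ?_
  rw [Lagrange.nodalWeight, Finset.prod_inv_distrib, div_eq_inv_mul]

variable {ι : Type*} [Fintype ι]

theorem neg_one_pow_card_Ioi_mul_nodalWeight_pos [LinearOrder ι] [LocallyFiniteOrderTop ι]
    {t : ι → ℝ} (ht : StrictMono t) (i : ι) :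
    0 < (-1) ^ (Finset.Ioi i).card * Lagrange.nodalWeight Finset.univ t i := by
  have sign : ∏ j ∈ Finset.univ.erase i, (if i < j then (-1 : ℝ) else 1) =
      (-1) ^ (Finset.Ioi i).card := by
    rw [Finset.prod_ite, Finset.prod_const, Finset.prod_const_one, mul_one]
    congr 2
    ext j
    simpa using ne_of_gt
  rw [Lagrange.nodalWeight, ← sign, ← Finset.prod_mul_distrib]
  refine Finset.prod_pos fun j hj => ?_
  rcases (Finset.ne_of_mem_erase hj).lt_or_gt with hji | hij
  · simpa [hji.not_gt] using ht hji
  · simpa [hij] using ht hij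

theorem mulVec_injective_of_scaled_powers {F : Type*} [Field F] {t s : ι → F}
    (ht : Function.Injective t) (hs : ∀ i, s i ≠ 0) {h : ℕ} (hh : h ≤ Fintype.card ι) :
    Function.Injective
      (Matrix.of fun (i : ι) (a : Fin h) => s i * t i ^ (a : ℕ)).mulVec := by
  obtain ⟨f⟩ : Nonempty (Fin h ↪ ι) :=
    Function.Embedding.nonempty_of_card_le (by rwa [Fintype.card_fin])
  refine (injective_iff_map_eq_zero (mulVecLin _)).mpr fun v hv => ?_
  refine eq_zero_of_forall_index_sum_pow_mul_eq_zero (ht.comp f.injective) fun j => ?_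
  refine (mul_eq_zero_iff_left (hs (f j))).mp ?_
  simpa [mulVec, dotProduct, Finset.mul_sum, mul_assoc] using congrFun hv (f j)

variable [DecidableEq ι]

-- With columns `√(w i / ρ i) * t i ^ a`, where `w` are the nodal weights, the entries of the
-- compression are divided differences of `x ^ (a + b) * (1 + x * I)`, whose degree is too small.
theorem hasIsotropicFrame_diagonal_of_nodalWeight {t ρ : ι → ℝ} (ht : Function.Injective t)
    (hρ : ∀ i, 0 < ρ i * Lagrange.nodalWeight Finset.univ t i) (c : ℂ) {h : ℕ}
    (hh : 2 * h < Fintype.card ι) :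
    HasIsotropicFrame (diagonal fun i => c * (ρ i * (1 + t i * Complex.I))) (Fin h) := by
  set w := Lagrange.nodalWeight Finset.univ t with hw
  have hratio (i) : 0 < w i / ρ i :=
    div_pos_iff.mpr ((mul_pos_iff.mp (hρ i)).imp And.symm And.symm)
  have hscale (i) : (√(w i / ρ i) : ℂ) * √(w i / ρ i) * ρ i = w i := by
    rw [← Complex.ofReal_mul, Real.mul_self_sqrt (hratio i).le, ← Complex.ofReal_mul,
      div_mul_cancel₀ _ (left_ne_zero_of_mul (hρ i).ne')]
  have hweight (i) : (w i : ℂ) = Lagrange.nodalWeight Finset.univ (fun j => (t j : ℂ)) i := by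
    simp [hw, Lagrange.nodalWeight]
  have ht_complex : Function.Injective fun i => (t i : ℂ) := Complex.ofReal_injective.comp ht
  refine .of_mulVec_injective (mulVec_injective_of_scaled_powers ht_complex
    (fun i => Complex.ofReal_ne_zero.mpr (Real.sqrt_pos.mpr (hratio i)).ne') (by omega)) ?_
  ext a b
  let P : ℂ[X] := X ^ (a + b : ℕ) * (1 + C Complex.I * X)
  have hdeg : P.natDegree ≤ a + b + 1 := by
    simp only [P]
    compute_degree
  have vanish := sum_nodalWeight_mul_eval_eq_zero (s := Finset.univ) ht_complex.injOn (P := P)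
    (by rw [Finset.card_univ]; omega)
  calc _ = c * ∑ i, Lagrange.nodalWeight Finset.univ (fun j => (t j : ℂ)) i * P.eval (t i : ℂ) := by
        rw [Matrix.mul_assoc, Matrix.mul_apply]
        simp only [conjTranspose_apply, diagonal_mul, of_apply, star_mul',
          star_pow, RCLike.star_def, Complex.conj_ofReal, Finset.mul_sum, ← hweight, P, eval_mul,
          eval_pow, eval_X, eval_add, eval_one, eval_C]
        refine Finset.sum_congr rfl fun i _ => ?_
        linear_combination (c * t i ^ (a + b : ℕ) * (1 + t i * Complex.I)) * hscale i
    _ = 0 := by rw [vanish, mul_zero]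

end Interpolation

section AlternatingSigns

variable {ι κ : Type*} [Fintype ι]

theorem isCompact_setOf_conjTranspose_mul_self_eq_one [Finite κ] [DecidableEq κ] :
    IsCompact {V : Matrix ι κ ℂ | Vᴴ * V = 1} := by
  have unit_box : IsCompact (Set.univ.pi fun _ : ι => Set.univ.pi fun _ : κ =>
      Metric.closedBall (0 : ℂ) 1) :=
    isCompact_univ_pi fun _ => isCompact_univ_pi fun _ => isCompact_closedBall _ _
  refine unit_box.of_isClosed_subset (isClosed_eq (by fun_prop) continuous_const) ?_
  intro (V : Matrix ι κ ℂ) (hV : Vᴴ * V = 1) i _ a _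
  have column_norm : ∑ j, ‖V j a‖ ^ 2 = 1 := by
    have := congrFun₂ hV a a
    simp only [Matrix.mul_apply, conjTranspose_apply, one_apply_eq, RCLike.star_def,
      Complex.conj_mul'] at this
    exact_mod_cast this
  rw [mem_closedBall_zero_iff, ← sq_le_one_iff₀ (norm_nonneg _), ← column_norm]
  exact Finset.single_le_sum (f := fun j => ‖V j a‖ ^ 2) (fun _ _ => by positivity)
    (Finset.mem_univ i)

theorem isClosed_setOf_hasIsotropicFrame [Finite κ] [DecidableEq κ] :
    IsClosed {A : Matrix ι ι ℂ | HasIsotropicFrame A κ} := by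
  have : CompactSpace {V : Matrix ι κ ℂ | Vᴴ * V = 1} :=
    isCompact_iff_compactSpace.mp isCompact_setOf_conjTranspose_mul_self_eq_one
  have hclosed : IsClosed {p : {V : Matrix ι κ ℂ | Vᴴ * V = 1} × Matrix ι ι ℂ |
      p.1.1ᴴ * p.2 * p.1.1 = 0} :=
    isClosed_eq (by fun_prop) continuous_const
  convert isClosedMap_snd_of_compactSpace _ hclosed
  ext A
  simp [HasIsotropicFrame]

variable [LinearOrder ι] [LocallyFiniteOrderTop ι] {φ : ℝ} {r θ : ι → ℝ} {h : ℕ}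

theorem hasIsotropicFrame_diagonal_of_strictMono (hθ : StrictMono θ)
    (hφ : ∀ i, θ i ∈ Set.Ioo (φ - Real.pi / 2) (φ + Real.pi / 2)) (hr : ∀ i, 0 < r i)
    (hh : 2 * h < Fintype.card ι) :
    HasIsotropicFrame (diagonal fun i =>
      (-1) ^ (Finset.Ioi i).card * (r i * Complex.exp (θ i * Complex.I))) (Fin h) := by
  have hψ (i) : θ i - φ ∈ Set.Ioo (-(Real.pi / 2)) (Real.pi / 2) :=
    ⟨by linarith [(hφ i).1], by linarith [(hφ i).2]⟩
  have hcos (i) : 0 < Real.cos (θ i - φ) := Real.cos_pos_of_mem_Ioo (hψ i)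
  have htan : StrictMono fun i => Real.tan (θ i - φ) := fun i j hij =>
    Real.strictMonoOn_tan (hψ i) (hψ j) (sub_lt_sub_right (hθ hij) φ)
  have frame := hasIsotropicFrame_diagonal_of_nodalWeight htan.injective
    (ρ := fun i => (-1) ^ (Finset.Ioi i).card * (r i * Real.cos (θ i - φ)))
    (fun i => by
      rw [mul_right_comm]
      exact mul_pos (neg_one_pow_card_Ioi_mul_nodalWeight_pos htan i) (mul_pos (hr i) (hcos i)))
    (Complex.exp (φ * Complex.I)) hh
  convert frame using 3 with i
  have polar : Complex.exp (θ i * Complex.I) = Complex.exp (φ * Complex.I) *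
      (Real.cos (θ i - φ) * (1 + Real.tan (θ i - φ) * Complex.I)) := by
    have hcos_ne : (Real.cos (θ i - φ) : ℂ) ≠ 0 := Complex.ofReal_ne_zero.mpr (hcos i).ne'
    rw [Real.tan_eq_sin_div_cos, Complex.ofReal_div, mul_add, mul_one, ← mul_assoc,
      mul_div_cancel₀ _ hcos_ne, Complex.ofReal_cos, Complex.ofReal_sin, ← Complex.exp_mul_I,
      ← Complex.exp_add]
    push_cast
    ring_nf
  rw [polar]
  push_cast
  ring

-- Frames persist under limits, so the angles `θ` may be perturbed towards strictly increasing ones.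
theorem hasIsotropicFrame_diagonal_of_monotone {n h : ℕ} {φ : ℝ} {r θ : Fin n → ℝ}
    (hθ : Monotone θ) (hφ : ∀ i, θ i ∈ Set.Icc (φ - Real.pi / 2) (φ + Real.pi / 2))
    (hr : ∀ i, 0 < r i) (hh : 2 * h < n) :
    HasIsotropicFrame (diagonal fun i =>
      (-1) ^ (Finset.Ioi i).card * (r i * Complex.exp (θ i * Complex.I))) (Fin h) := by
  let ψ (δ : ℝ) (i : Fin n) : ℝ := (1 - δ) * θ i + δ * (φ + Real.arctan i)
  let D (δ : ℝ) : Matrix (Fin n) (Fin n) ℂ := diagonal fun i =>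
    (-1) ^ (Finset.Ioi i).card * (r i * Complex.exp (ψ δ i * Complex.I))
  have hD : Continuous D := by fun_prop
  have perturbed : Set.Ioo 0 1 ⊆ {δ | HasIsotropicFrame (D δ) (Fin h)} := by
    rintro δ ⟨hδ, hδ1⟩
    refine hasIsotropicFrame_diagonal_of_strictMono (φ := φ) (fun i j hij => ?_) (fun i => ?_) hr
      (by rwa [Fintype.card_fin])
    · have harctan : Real.arctan i < Real.arctan j := Real.arctan_strictMono (by exact_mod_cast hij)
      exact add_lt_add_of_le_of_lt
        (mul_le_mul_of_nonneg_left (hθ hij.le) (by linarith)) (by gcongr)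
    · obtain ⟨hlow, hhigh⟩ := hφ i
      have := Real.neg_pi_div_two_lt_arctan i
      have := Real.arctan_lt_pi_div_two i
      simp only [ψ]
      constructor <;> nlinarith
  have hclosed : IsClosed {δ | HasIsotropicFrame (D δ) (Fin h)} :=
    isClosed_setOf_hasIsotropicFrame.preimage hD
  have limit := closure_minimal perturbed hclosed
  rw [closure_Ioo zero_ne_one] at limit
  simpa [D, ψ] using limit (Set.left_mem_Icc.mpr zero_le_one)

end AlternatingSigns

section HalfTurnInterlacing

/-- Angles `θ`, meant to be increasing and within one turn, are half-turn interlaced if they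
advance by at most `π` over `⌊m / 2⌋` indices and by at least `π` over `⌈m / 2⌉` indices; for even
`m` the advance over `m / 2` indices is then exactly `π`. This is the condition of part (b),
uniformly in the parity of `m` and with indices starting at `0`. -/
def IsHalfTurnInterlaced {m : ℕ} (θ : Fin m → ℝ) : Prop :=
  (∀ a b : Fin m, (b : ℕ) = a + m / 2 → θ b - θ a ≤ Real.pi) ∧
    ∀ a b : Fin m, (b : ℕ) = a + (m + 1) / 2 → Real.pi ≤ θ b - θ a

theorem isHalfTurnInterlaced_iff {m : ℕ} {θ : Fin m → ℝ} :
    IsHalfTurnInterlaced θ ↔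
      (∀ _ : m % 2 = 0, ∀ (j : ℕ) (_ : 1 ≤ j) (_ : j ≤ m / 2),
        θ ⟨j + m / 2 - 1, by omega⟩ - θ ⟨j - 1, by omega⟩ = Real.pi) ∧
      (∀ _ : m % 2 = 1,
        (∀ (j : ℕ) (_ : 1 ≤ j) (_ : j ≤ (m + 1) / 2),
          θ ⟨j + (m - 1) / 2 - 1, by omega⟩ - θ ⟨j - 1, by omega⟩ ≤ Real.pi) ∧
        (∀ (j : ℕ) (_ : (m + 3) / 2 ≤ j) (_ : j ≤ m),
          θ ⟨j - (m + 1) / 2 - 1, by omega⟩ - θ ⟨j - 1, by omega⟩ ≤ -Real.pi)) := by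
  constructor
  · rintro ⟨hnear, hfar⟩
    refine ⟨fun hm j h1 h2 => ?_, fun hm => ⟨fun j h1 h2 => ?_, fun j h1 h2 => ?_⟩⟩
    · exact le_antisymm (hnear _ _ (by simp only; omega)) (hfar _ _ (by simp only; omega))
    · exact hnear _ _ (by simp only; omega)
    · have := hfar ⟨j - (m + 1) / 2 - 1, by omega⟩ ⟨j - 1, by omega⟩ (by simp only; omega)
      linarith
  · rintro ⟨heven, hodd⟩
    constructor <;> intro a b hab <;> rcases Nat.mod_two_eq_zero_or_one m with hm | hm
    · have := heven hm (a + 1) (by omega) (by omega)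
      grind
    · have := (hodd hm).1 (a + 1) (by omega) (by omega)
      grind
    · have := heven hm (a + 1) (by omega) (by omega)
      grind
    · have := (hodd hm).2 (b + 1) (by omega) (by omega)
      grind

theorem IsHalfTurnInterlaced.hasIsotropicFrame_diagonal_of_even {h : ℕ}
    {l : Fin (2 * h) → ℂ} (hl : ∀ i, l i ≠ 0)
    (hint : IsHalfTurnInterlaced fun i => arg2pi (l i)) :
    HasIsotropicFrame (diagonal l) (Fin h) := by
  obtain ⟨hnear, hfar⟩ := hint
  rw [show 2 * h / 2 = h by omega] at hnear
  rw [show (2 * h + 1) / 2 = h by omega] at hfar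
  let e : Fin 2 × Fin h ≃ Fin (2 * h) := finProdFinEquiv
  refine .of_submatrix e.toEmbedding ?_
  have blocks : (diagonal l).submatrix e e =
      blockDiagonal fun a => diagonal fun s => l (e (s, a)) := by
    rw [submatrix_diagonal_equiv, blockDiagonal_diagonal]
    rfl
  have frames (a : Fin h) : HasIsotropicFrame (diagonal fun s => l (e (s, a))) (Fin 1) := by
    apply hasIsotropicFrame_diagonal_of_zero_mem_convexHull
    have hrange : Set.range (fun s => l (e (s, a))) = {l (e (0, a)), l (e (1, a))} := by
      ext; simp [Fin.exists_fin_two, eq_comm]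
    rw [hrange]
    have hstep : (e (1, a) : ℕ) = e (0, a) + h := by simp [e, finProdFinEquiv]
    exact zero_mem_convexHull_pair_of_arg2pi_sub_eq_pi (hl _)
      ((hnear _ _ hstep).antisymm (hfar _ _ hstep))
  have := (HasIsotropicFrame.blockDiagonal frames).comp_embedding
    (⟨fun a => (0, a), fun a b hab => (Prod.ext_iff.mp hab).2⟩ : Fin h ↪ Fin 1 × Fin h)
  rwa [← blocks] at this

/-- The order `0, h + 1, 1, h + 2, …, h` of the indices below `2 * h + 1`, which is halving modulo
`2 * h + 1`: consecutive indices differ by `h + 1` upwards and `h` downwards, that is, by about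
half a turn when the indices enumerate points by argument. -/
def interleave (h : ℕ) (i : Fin (2 * h + 1)) : Fin (2 * h + 1) :=
  if hi : Even (i : ℕ) then ⟨i / 2, by omega⟩ else ⟨h + 1 + i / 2, by grind⟩

theorem interleave_injective (h : ℕ) : Function.Injective (interleave h) := by
  intro i j hij
  have := congrArg Fin.val hij
  grind [interleave]

theorem IsHalfTurnInterlaced.hasIsotropicFrame_diagonal_of_odd {h : ℕ}
    {l : Fin (2 * h + 1) → ℂ} (hl : ∀ i, l i ≠ 0)
    (hint : IsHalfTurnInterlaced fun i => arg2pi (l i)) :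
    HasIsotropicFrame (diagonal l) (Fin h) := by
  obtain ⟨hnear, hfar⟩ := hint
  rw [show (2 * h + 1) / 2 = h by omega] at hnear
  rw [show (2 * h + 1 + 1) / 2 = h + 1 by omega] at hfar
  let σ := interleave h
  let θ (i : Fin (2 * h + 1)) : ℝ :=
    arg2pi (l (σ i)) - if Even (i : ℕ) then 0 else Real.pi
  have hθ : Monotone θ := by
    rw [Fin.monotone_iff_le_succ]
    intro i
    by_cases hi : Even (i : ℕ)
    · have := hfar (σ i.castSucc) (σ i.succ) (by grind [interleave])
      simp only [θ, Fin.val_castSucc, Fin.val_succ, hi, Nat.even_add_one, not_true, if_true,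
        if_false]
      linarith
    · have := hnear (σ i.succ) (σ i.castSucc) (by grind [interleave])
      simp only [θ, Fin.val_castSucc, Fin.val_succ, hi, Nat.even_add_one, not_false_eq_true,
        if_true, if_false]
      linarith
  have spread : θ (Fin.last _) - θ 0 ≤ Real.pi := by
    have := hnear (σ 0) (σ (Fin.last _)) (by simp [σ, interleave])
    simpa [θ] using this
  have frame := hasIsotropicFrame_diagonal_of_monotone (φ := (θ 0 + θ (Fin.last _)) / 2) hθ
    (fun i => by
      have := hθ (Fin.zero_le i)
      have := hθ (Fin.le_last i)
      constructor <;> linarith)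
    (fun i => norm_pos_iff.mpr (hl (σ i))) (Nat.lt_succ_self (2 * h))
  refine .of_submatrix ⟨σ, interleave_injective h⟩ ?_
  convert frame using 1
  rw [submatrix_diagonal_embedding]
  congr 1 with i
  have polar := norm_mul_exp_arg2pi_mul_I (l (σ i))
  by_cases hi : Even (i : ℕ)
  · have hcard : Even (Finset.Ioi i).card := by grind [Fin.card_Ioi]
    rw [hcard.neg_one_pow]
    simp [θ, hi, polar]
  · have hcard : Odd (Finset.Ioi i).card := by grind [Fin.card_Ioi]
    rw [hcard.neg_one_pow]
    simp [θ, hi, sub_mul, Complex.exp_sub, div_neg, polar]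

variable {m : ℕ} {l : Fin m → ℂ} {κ : Type*} [Fintype κ] [DecidableEq κ]

theorem IsHalfTurnInterlaced.half_le_zdi_diagonal (hl : ∀ i, l i ≠ 0)
    (hint : IsHalfTurnInterlaced fun i => arg2pi (l i)) : m / 2 ≤ zdi (diagonal l) := by
  rw [le_zdi_iff]
  obtain ⟨h, rfl | rfl⟩ := m.even_or_odd'
  · rw [show 2 * h / 2 = h by omega]
    exact hint.hasIsotropicFrame_diagonal_of_even hl
  · rw [show (2 * h + 1) / 2 = h by omega]
    exact hint.hasIsotropicFrame_diagonal_of_odd hl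

theorem isHalfTurnInterlaced_of_le_zdi (hl : ∀ i, l i ≠ 0)
    (hsort : Monotone fun i => arg2pi (l i))
    (hle : Fintype.card κ + m / 2 ≤ zdi (diagonal (Sum.elim (0 : κ → ℂ) l))) :
    IsHalfTurnInterlaced fun i => arg2pi (l i) := by
  refine ⟨fun a b hab => ?_, fun a b hab => ?_⟩ <;> by_contra! hlt
  · have := hle.trans (zdi_diagonal_sumElim_zero_le_card_Ioo hl hsort hlt)
    have hne : a ≠ b := by
      rintro rfl
      linarith [Real.pi_pos]
    rw [Fin.card_Ioo] at this
    omega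
  · have := hle.trans (zdi_diagonal_sumElim_zero_le_card_compl_Icc hl hsort hlt)
    rw [Finset.card_compl, Fin.card_Icc, Fintype.card_fin] at this
    omega

theorem zdi_diagonal_sumElim_zero_eq_card_add_half_iff (hl : ∀ i, l i ≠ 0)
    (hsort : Monotone fun i => arg2pi (l i)) :
    zdi (diagonal (Sum.elim (0 : κ → ℂ) l)) = Fintype.card κ + m / 2 ↔
      IsHalfTurnInterlaced fun i => arg2pi (l i) := by
  refine ⟨fun heq => isHalfTurnInterlaced_of_le_zdi hl hsort heq.ge, fun hint => ?_⟩
  apply le_antisymm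
  · simpa using zdi_diagonal_sumElim_zero_le_half (κ := κ) hl
  · exact (Nat.add_le_add_left (hint.half_le_zdi_diagonal hl) _).trans
      (card_le_zdi_diagonal_sumElim_zero l)

end HalfTurnInterlacing

/-- Theorem 4.1. -/
theorem zdi_normal {n k : ℕ} (A : Matrix (Fin n) (Fin n) ℂ)
    (hnormal : A * Aᴴ = Aᴴ * A)
    (hk : Module.finrank ℂ (LinearMap.ker A.mulVecLin) = k)
    (l : Fin (n - k) → ℂ) (hl0 : ∀ i, l i ≠ 0)
    (hsort : Monotone fun i => arg2pi (l i))
    (hchar : A.charpoly = X ^ k * ∏ i, (X - C (l i))) :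
    k ≤ zdi A ∧ zdi A ≤ (n + k) / 2 ∧
    (zdi A = k ↔ (0 : ℂ) ∉ convexHull ℝ (Set.range l)) ∧
    (zdi A = (n + k) / 2 ↔
      ((∀ _he : (n - k) % 2 = 0,
        ∀ (j : ℕ) (_h1 : 1 ≤ j) (_h2 : j ≤ (n - k) / 2),
          arg2pi (l ⟨j + (n - k) / 2 - 1, by omega⟩) - arg2pi (l ⟨j - 1, by omega⟩) = Real.pi) ∧
       (∀ _ho : (n - k) % 2 = 1,
        (∀ (j : ℕ) (_h1 : 1 ≤ j) (_h2 : j ≤ (n - k + 1) / 2),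
          arg2pi (l ⟨j + (n - k - 1) / 2 - 1, by omega⟩) - arg2pi (l ⟨j - 1, by omega⟩)
            ≤ Real.pi) ∧
        (∀ (j : ℕ) (_h1 : (n - k + 3) / 2 ≤ j) (_h2 : j ≤ n - k),
          arg2pi (l ⟨j - (n - k + 1) / 2 - 1, by omega⟩) - arg2pi (l ⟨j - 1, by omega⟩)
            ≤ -Real.pi)))) := by
  have hA : UnitSimG A (diagonal (Sum.elim (0 : Fin k → ℂ) l)) :=
    unitSimG_diagonal_of_charpoly_eq ⟨hnormal.symm⟩ (by simp [hchar])
  have hn : n = k + (n - k) := by simpa using Fintype.card_congr hA.choose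
  have hhalf : (n + k) / 2 = k + (n - k) / 2 := by omega
  have lower := card_le_zdi_diagonal_sumElim_zero (κ := Fin k) l
  have upper := zdi_diagonal_sumElim_zero_le_half (κ := Fin k) hl0
  have hull := zdi_diagonal_sumElim_zero_eq_card_iff (κ := Fin k) (l := l)
  have half := zdi_diagonal_sumElim_zero_eq_card_add_half_iff (κ := Fin k) hl0 hsort
  simp only [Fintype.card_fin] at lower upper hull half
  rw [hA.zdi_eq, hhalf]
  exact ⟨by omega, upper, hull, half.trans isHalfTurnInterlaced_iff⟩
end
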